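/- arXiv:2501.14988 — 2 statements merged into one kernel-verified Lean document; each statement's English description precedes it below -/
import Mathlib

section
/- Let κ be a singular cardinal and U an ultrafilter over a set S. If U is κ⁺-decomposable but κ-indecomposable, then U is almost <κ-decomposable, i.e., there is a cardinal λ < κ such that U is μ-decomposable for every regular cardinal μ with λ < μ < κ. -/
open Cardinal Set

universe u v

/-- An ultrafilter is uniform if all of its members have full cardinality. -/
def Uniform {α : Type u} (U : Ultrafilter α) : Prop := ∀ X ∈ U, #X = #α

/-- An ultrafilter `U` over `S` is `l`-decomposable if there is `f : S → l`
such that preimages of sets of size `< l` are not in `U`. -/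
def Decomposable {S : Type u} (U : Ultrafilter S) (l : Cardinal.{v}) : Prop :=
  ∃ f : S → l.out, ∀ X : Set l.out, #X < l → f ⁻¹' X ∉ U

/-- The character of an ultrafilter: the least cardinality of a base. -/
noncomputable def charU {α : Type u} (U : Ultrafilter α) : Cardinal.{u} :=
  sInf {c | ∃ B : Set (Set α), #B = c ∧ (∀ X ∈ B, X ∈ U) ∧ ∀ Y ∈ U, ∃ X ∈ B, X ⊆ Y}

/-- The ultrafilter number at a cardinal `κ`: the minimal character of a
uniform ultrafilter over (a set of size) `κ`. -/
noncomputable def uNumber (κ : Cardinal.{u}) : Cardinal.{u} :=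
  sInf {c | ∃ U : Ultrafilter κ.out, Uniform U ∧ charU U = c}


/-! ### Basic facts on the canonical well-order of cardinal type -/

/-- The canonical well-order of type `c`. -/
abbrev WO (c : Cardinal.{v}) : Type v := c.ord.ToType

theorem wo_bdd {c : Cardinal.{v}} (hc : c.IsRegular) (B : Set (WO c)) (hB : #B < c) :
    ∃ b, ∀ x ∈ B, x < b := by
  by_contra! h
  have : IsCofinal B := by
    intro x
    obtain ⟨y, hy, hxy⟩ := h x
    exact ⟨y, hy, hxy⟩
  have h2 := Order.cof_le this
  rw [Ordinal.cof_toType, hc.cof_ord] at h2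
  exact absurd hB (not_lt.2 h2)

theorem wo_unbdd_card {c : Cardinal.{v}} (hc : c.IsRegular) (B : Set (WO c))
    (hB : ∀ x, ∃ y ∈ B, x ≤ y) : c ≤ #B := by
  by_contra! h
  obtain ⟨b, hb⟩ := wo_bdd hc B h
  obtain ⟨y, hy, hby⟩ := hB b
  exact absurd (hb y hy) (not_lt.2 hby)

theorem wo_gt {c : Cardinal.{v}} (hc : c.IsRegular) (x : WO c) : ∃ y, x < y := by
  obtain ⟨b, hb⟩ := wo_bdd hc {x} (by
    rw [mk_singleton]; exact one_lt_aleph0.trans_le hc.aleph0_le)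
  exact ⟨b, hb x rfl⟩

theorem wo_unbdd_of_card {c : Cardinal.{v}} (hc : c.IsRegular) (B : Set (WO c)) (hB : c ≤ #B)
    (x : WO c) : ∃ y ∈ B, x < y := by
  by_contra! h
  obtain ⟨y, hy⟩ := wo_gt hc x
  have : B ⊆ Iio y := fun z hz => (h z hz).trans_lt hy
  exact absurd (hB.trans (mk_le_mk_of_subset this)) (not_le.2 (mk_Iio_toType_ord_lt y))

theorem wo_embed {c : Cardinal.{v}} {Q : Type v} [LinearOrder Q] [WellFoundedLT Q] (C : Set Q)
    (hC : c ≤ #C) : ∃ e : WO c → Q, StrictMono e ∧ ∀ x, e x ∈ C := by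
  have h : Ordinal.type (α := WO c) (· < ·) ≤ Ordinal.type (α := C) (· < ·) := by
    rw [Ordinal.type_toType, Cardinal.ord_le]
    simpa using hC
  obtain ⟨e⟩ := Ordinal.type_le_iff'.1 h
  exact ⟨fun x => (e x).1, fun x y hxy => e.map_rel_iff.2 hxy, fun x => (e x).2⟩

theorem wo_succ {c : Cardinal.{v}} (hc : c.IsRegular) :
    ∃ s : WO c → WO c, (∀ x, x < s x) ∧ ∀ x y, x < y → s x ≤ y := by
  refine ⟨Order.succ, fun x => ?_, fun x y h => Order.succ_le_of_lt h⟩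
  obtain ⟨y, hy⟩ := wo_gt hc x
  exact Order.lt_succ_of_not_isMax (fun h => absurd (h hy.le) (not_le.2 hy))

theorem wo_pigeon {c : Cardinal.{v}} (hc : c.IsRegular) {A : Type v} (hA : #A < c)
    (h : WO c → A) : ∃ a, c ≤ #{x | h x = a} := by
  obtain ⟨a, ha⟩ := infinite_pigeonhole_card h c (by simp) hc.aleph0_le (by rwa [hc.cof_ord])
  exact ⟨a, ha⟩

theorem exists_lub {P : Type*} [LinearOrder P] [WellFoundedLT P] (B : Set P)
    (h : ∃ b, ∀ x ∈ B, x ≤ b) : ∃ x, IsLUB B x := by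
  obtain ⟨m, hm, hm2⟩ := WellFounded.has_min (wellFounded_lt (α := P)) (upperBounds B) h
  exact ⟨m, hm, fun y hy => not_lt.1 (hm2 y hy)⟩

theorem exists_least {P : Type*} [LinearOrder P] [WellFoundedLT P] (p : P → Prop)
    (h : ∃ b, p b) : ∃ x, p x ∧ ∀ y, p y → x ≤ y := by
  obtain ⟨m, hm, hm2⟩ := WellFounded.has_min (wellFounded_lt (α := P)) {x | p x} h
  exact ⟨m, hm, fun y hy => not_lt.1 (hm2 y hy)⟩

theorem antitone_stab {P L : Type*} [LinearOrder P] [Nonempty P] [LinearOrder L] [WellFoundedLT L]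
    (h : P → L) (hh : Antitone h) : ∃ x, ∀ y, x ≤ y → h y = h x := by
  obtain ⟨m, ⟨x, rfl⟩, hm⟩ := exists_least (fun l => ∃ x, h x = l) ⟨_, Classical.arbitrary P, rfl⟩
  exact ⟨x, fun y hy => (hh hy).antisymm (hm _ ⟨y, rfl⟩)⟩

theorem monotone_stab {c : Cardinal.{v}} (hc : c.IsRegular) {A : Type v} [LinearOrder A]
    (hA : #A < c) (h : WO c → A) (hh : Monotone h) : ∃ x, ∀ y, x ≤ y → h y = h x := by
  obtain ⟨a, ha⟩ := wo_pigeon hc hA h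
  have hu := wo_unbdd_of_card hc _ ha
  have : Nonempty (WO c) := by
    rw [← mk_ne_zero_iff]; simpa using (aleph0_pos.trans_le hc.aleph0_le).ne'
  obtain ⟨x, hx, -⟩ := hu (Classical.arbitrary _)
  refine ⟨x, fun y hy => le_antisymm ?_ (hh hy)⟩
  obtain ⟨z, hz, hyz⟩ := hu y
  exact (hh hyz.le).trans (by rw [hx, hz])

theorem rec_exists {Q : Type*} {P : Type*} [LinearOrder Q] [WellFoundedLT Q] [Nonempty P]
    (Rel : (Q → P) → Q → P → Prop)
    (hloc : ∀ x x' y p, (∀ z < y, x z = x' z) → Rel x y p → Rel x' y p)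
    (hex : ∀ x y, ∃ p, Rel x y p) : ∃ x : Q → P, ∀ y, Rel x y (x y) := by
  classical
  choose G hG using hex
  let ext : (y : Q) → ((z : Q) → z < y → P) → Q → P := fun y h z =>
    if hz : z < y then h z hz else Classical.arbitrary P
  let x : Q → P := (wellFounded_lt (α := Q)).fix (fun y h => G (ext y h) y)
  refine ⟨x, fun y => ?_⟩
  have hx : x y = G (ext y (fun z _ => x z)) y := WellFounded.fix_eq _ _ _
  rw [hx]
  refine hloc _ _ _ _ (fun z hz => ?_) (hG _ _)
  simp [ext, hz]

theorem wo_nonempty {c : Cardinal.{v}} (hc : c.IsRegular) : Nonempty (WO c) := by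
  rw [← mk_ne_zero_iff]; simpa using (aleph0_pos.trans_le hc.aleph0_le).ne'

/-! ### Club guessing -/

theorem wo_iInter_club {c : Cardinal.{v}} (hc : c.IsRegular) (hc0 : ℵ₀ < c) {ι : Type v}
    (hι : #ι < c) (F : ι → Set (WO c)) (hF : ∀ i, IsClub (F i)) : IsClub (⋂ i, F i) := by
  have h : Order.cof (WO c) = c := by rw [Ordinal.cof_toType, hc.cof_ord]
  exact IsClub.iInter (by rw [h]; exact hc0.ne') (by rw [h]; simpa using hι) hF

theorem wo_club_card {c : Cardinal.{v}} (hc : c.IsRegular) (E : Set (WO c)) (hE : IsClub E) :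
    c ≤ #E :=
  wo_unbdd_card hc E (fun x => by
    obtain ⟨y, hy, h⟩ := hE.isCofinal x
    exact ⟨y, hy, h⟩)

theorem club_guessing {θ : Cardinal.{v}} (hθ : θ.IsRegular) :
    ∃ C : WO (Order.succ (Order.succ θ)) → Set (WO (Order.succ (Order.succ θ))),
      ∀ E, IsClub E → ∃ α, C α ⊆ E ∧ θ ≤ #(C α) := by
  classical
  have hρ : (Order.succ θ).IsRegular := isRegular_succ hθ.aleph0_le
  have hσ : (Order.succ (Order.succ θ)).IsRegular := isRegular_succ hρ.aleph0_le
  have hρ1 : θ < Order.succ θ := Order.lt_succ θ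
  have hσ1 : Order.succ θ < Order.succ (Order.succ θ) := Order.lt_succ _
  generalize Order.succ (Order.succ θ) = σ at *
  generalize Order.succ θ = ρ at *
  have := wo_nonempty hσ
  have := wo_nonempty hρ
  have := wo_nonempty hθ
  -- the projections
  have hpi : ∀ (E : Set (WO σ)) (β : WO σ), ∃ x, IsLUB (E ∩ Iic β) x := fun E β =>
    exists_lub _ ⟨β, fun x hx => hx.2⟩
  choose π hπ using hpi
  have hπle : ∀ E β, π E β ≤ β := fun E β => (hπ E β).2 (fun x hx => hx.2)
  have hπge : ∀ E β x, x ∈ E → x ≤ β → x ≤ π E β := fun E β x hx hxb => (hπ E β).1 ⟨hx, hxb⟩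
  have hπanti : ∀ E E' β, E' ⊆ E → π E' β ≤ π E β := fun E E' β h =>
    (hπ E' β).2 (fun x hx => (hπ E β).1 ⟨h hx.1, hx.2⟩)
  have hπmem : ∀ E β, IsClub E → ¬ IsBot (π E β) → π E β ∈ E := by
    intro E β hE hb
    by_cases hne : (E ∩ Iic β).Nonempty
    · exact hE.isLUB_mem inter_subset_left hne (hπ E β)
    · rw [not_nonempty_iff_eq_empty] at hne
      have := hπ E β
      rw [hne] at this
      exact absurd (isLUB_empty_iff.1 this) hb
  -- the sequences
  have hc : ∀ α : WO σ, ∃ c : WO θ → WO σ,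
      (∃ c' : WO θ → WO σ, StrictMono c' ∧ IsLUB (range c') α) →
        StrictMono c ∧ IsLUB (range c) α := by
    intro α
    by_cases h : ∃ c' : WO θ → WO σ, StrictMono c' ∧ IsLUB (range c') α
    · obtain ⟨c', h'⟩ := h
      exact ⟨c', fun _ => h'⟩
    · exact ⟨fun _ => Classical.arbitrary _, fun h' => absurd h' h⟩
  choose c hc using hc
  let D : Set (WO σ) → WO σ → Set (WO σ) := fun E α => {x | (∃ ξ, π E (c α ξ) = x) ∧ ¬ IsBot x}
  by_contra hcon
  have hfail : ∀ E, ∃ F, IsClub F ∧ ∀ α, D E α ⊆ F → #(D E α) < θ := by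
    intro E
    by_contra! h
    exact hcon ⟨D E, fun F hF => h F hF⟩
  choose Φ hΦ1 hΦ2 using hfail
  obtain ⟨E, hE⟩ := rec_exists (Q := WO ρ) (P := Set (WO σ))
    (fun x y p => p = ⋂ z : Iio y, Φ (x z.1))
    (by
      rintro x x' y p h rfl
      refine iInter_congr (fun z => ?_)
      rw [h z.1 z.2])
    (fun x y => ⟨_, rfl⟩)
  have hEsub : ∀ z y, z < y → E y ⊆ Φ (E z) := by
    intro z y hzy
    rw [hE y]
    exact iInter_subset (fun z : Iio y => Φ (E z.1)) ⟨z, hzy⟩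
  have hEanti : ∀ z y, z ≤ y → E y ⊆ E z := by
    intro z y hzy
    rw [hE z]
    exact subset_iInter (fun w => hEsub _ _ (lt_of_lt_of_le w.2 hzy))
  have hσ0 : ℵ₀ < σ := (hθ.aleph0_le.trans_lt hρ1).trans hσ1
  have hEclub : ∀ y, IsClub (E y) := by
    intro y
    rw [hE y]
    exact wo_iInter_club hσ hσ0 ((mk_Iio_toType_ord_lt y).trans hσ1) _ (fun z => hΦ1 _)
  have hEinf : IsClub (⋂ y, E y) :=
    wo_iInter_club hσ hσ0 (by simpa using hσ1) _ hEclub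
  have hθσ : θ < σ := hρ1.trans hσ1
  obtain ⟨e, he, heE⟩ := wo_embed (c := θ) (⋂ y, E y) (hθσ.le.trans (wo_club_card hσ _ hEinf))
  obtain ⟨α, hα⟩ : ∃ α, IsLUB (range e) α := by
    obtain ⟨b, hb⟩ := wo_bdd hσ (range e) (mk_range_le.trans_lt (by simpa using hθσ))
    exact exists_lub _ ⟨b, fun x hx => (hb x hx).le⟩
  obtain ⟨hcm, hcl⟩ := hc α ⟨e, he, hα⟩
  have hclt : ∀ ξ, c α ξ < α := by
    intro ξ
    obtain ⟨η, hη⟩ := wo_gt hθ ξ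
    exact (hcm hη).trans_le (hcl.1 ⟨η, rfl⟩)
  -- cofinality of the projections
  have hcof : ∀ y, ∀ x < α, ∃ d ∈ D (E y) α, x < d ∧ d < α := by
    intro y x hx
    obtain ⟨_, ⟨ξ, rfl⟩, hξ⟩ := (lt_isLUB_iff hα).1 hx
    have hlt : e ξ < α := by
      obtain ⟨η, hη⟩ := wo_gt hθ ξ
      exact (he hη).trans_le (hα.1 ⟨η, rfl⟩)
    obtain ⟨_, ⟨η, rfl⟩, hη⟩ := (lt_isLUB_iff hcl).1 hlt
    have h1 : e ξ ≤ π (E y) (c α η) := hπge _ _ _ (mem_iInter.1 (heE ξ) y) hη.le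
    exact ⟨π (E y) (c α η), ⟨⟨η, rfl⟩, fun hb => absurd (hb x) (not_le.2 (hξ.trans_le h1))⟩,
      hξ.trans_le h1, (hπle _ _).trans_lt (hclt η)⟩
  have hcard : ∀ y, θ ≤ #(D (E y) α) := by
    intro y
    by_contra! hlt
    have hDlt : ∀ d : D (E y) α, ∃ ξ, d.1 < c α ξ := by
      rintro ⟨d, ⟨ξ, rfl⟩, hd⟩
      obtain ⟨η, hη⟩ := wo_gt hθ ξ
      exact ⟨η, (hπle _ _).trans_lt (hcm hη)⟩
    choose k hk using hDlt
    obtain ⟨b, hb⟩ := wo_bdd hθ (range k) (mk_range_le.trans_lt hlt)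
    obtain ⟨d, hd, hbd, -⟩ := hcof y (c α b) (hclt b)
    have h1 := hk ⟨d, hd⟩
    have h2 := hcm (hb _ ⟨⟨d, hd⟩, rfl⟩)
    exact absurd (h1.trans h2) (not_lt.2 hbd.le)
  -- stabilization
  have hstab : ∀ ξ, ∃ z, ∀ y, z ≤ y → π (E y) (c α ξ) = π (E z) (c α ξ) := fun ξ =>
    antitone_stab (fun y => π (E y) (c α ξ)) (fun z y hzy => hπanti _ _ _ (hEanti z y hzy))
  choose z hz using hstab
  obtain ⟨b, hb⟩ := wo_bdd hρ (range z) (mk_range_le.trans_lt (by simpa using hρ1))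
  obtain ⟨b', hb'⟩ := wo_gt hρ b
  refine absurd (hΦ2 (E b) α ?_) (not_lt.2 (hcard b))
  rintro _ ⟨⟨ξ, rfl⟩, hbot⟩
  have h1 : π (E b) (c α ξ) = π (E b') (c α ξ) := by
    rw [hz ξ b (hb _ ⟨ξ, rfl⟩).le, hz ξ b' ((hb _ ⟨ξ, rfl⟩).trans hb').le]
  rw [h1] at hbot ⊢
  exact hEsub _ _ hb' (hπmem _ _ (hEclub b') hbot)

/-! ### The scale-like sequence -/

/-- `E` is closed and unbounded in `δ`. -/
def ClubBelow {P : Type v} [LinearOrder P] (δ : P) (E : Set P) : Prop :=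
  E ⊆ Iio δ ∧ (∀ x < δ, ∃ y ∈ E, x < y) ∧
    ∀ B ⊆ E, B.Nonempty → ∀ x < δ, IsLUB B x → x ∈ E

/-- The properties of the sequence of functions used in the proof. -/
structure Sys {P A : Type v} [LinearOrder P] [LinearOrder A] (κ : Cardinal.{v})
    (f : P → A → Ordinal.{v}) (g0 : A → Ordinal.{v}) : Prop where
  aleph : ℵ₀ ≤ κ
  bdd : ∀ B : Set P, #B ≤ κ → ∃ b, ∀ x ∈ B, x < b
  seg : ∀ y : P, #(Iio y) ≤ κ
  mono : ∀ β δ : P, β < δ → ∃ n, ∀ m, n ≤ m → f β m < f δ m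
  club : ∀ δ : P, (∃ E, ClubBelow δ E ∧ #E < κ) →
    ∃ E, ClubBelow δ E ∧ ∃ n, ∀ m, n ≤ m → ∀ β ∈ E, f β m < f δ m
  lt_g0 : ∀ δ a, f δ a < g0 a

theorem Sys.mono_le {P A : Type v} [LinearOrder P] [LinearOrder A] [Nonempty A] {κ : Cardinal.{v}}
    {f : P → A → Ordinal.{v}} {g0 : A → Ordinal.{v}} (H : Sys κ f g0) (β δ : P) (h : β ≤ δ) :
    ∃ n, ∀ m, n ≤ m → f β m ≤ f δ m := by
  rcases h.eq_or_lt with rfl | h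
  · exact ⟨Classical.arbitrary A, fun m _ => le_rfl⟩
  · obtain ⟨n, hn⟩ := H.mono β δ h
    exact ⟨n, fun m hm => (hn m hm).le⟩

/-- Uniformly increasing subsequences of length `θ`. -/
def StarP {P A : Type v} [LinearOrder P] [LinearOrder A] (f : P → A → Ordinal.{v})
    (θ : Cardinal.{v}) : Prop :=
  ∀ X : Set P, (∀ p, ∃ x ∈ X, p < x) → ∃ e : WO θ → P, StrictMono e ∧ (∀ ξ, e ξ ∈ X) ∧
    ∃ n0, ∀ ξ η, ξ < η → ∀ m, n0 ≤ m → f (e ξ) m < f (e η) m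

theorem star_of_sys {P A : Type v} [LinearOrder P] [WellFoundedLT P] [Nonempty P]
    [LinearOrder A] [Nonempty A]
    {κ : Cardinal.{v}} {f : P → A → Ordinal.{v}} {g0 : A → Ordinal.{v}} (H : Sys κ f g0)
    {θ : Cardinal.{v}} (hθ : θ.IsRegular) (hA : #A < θ)
    (hθκ : Order.succ (Order.succ θ) < κ) : StarP f θ := by
  classical
  intro X hX
  obtain ⟨C, hC⟩ := club_guessing hθ
  have hρ : (Order.succ θ).IsRegular := isRegular_succ hθ.aleph0_le
  have hσ : (Order.succ (Order.succ θ)).IsRegular := isRegular_succ hρ.aleph0_le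
  have hσ0 : ℵ₀ < Order.succ (Order.succ θ) :=
    hθ.aleph0_le.trans_lt ((Order.lt_succ θ).trans (Order.lt_succ _))
  generalize Order.succ (Order.succ θ) = σ at *
  have := wo_nonempty hσ
  -- least upper bounds
  have hlub : ∀ B : Set P, ∃ x, #B ≤ κ → IsLUB B x := by
    intro B
    by_cases hB : #B ≤ κ
    · obtain ⟨b, hb⟩ := H.bdd B hB
      obtain ⟨x, hx⟩ := exists_lub B ⟨b, fun x hx => (hb x hx).le⟩
      exact ⟨x, fun _ => hx⟩
    · exact ⟨Classical.arbitrary P, fun h => absurd h hB⟩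
  choose L hL using hlub
  have hΓ : ∀ B : Set P, ∃ γ, (∃ γ', ∃ n, ∀ m, n ≤ m → ∀ β ∈ B, f β m ≤ f γ' m) →
      ∃ n, ∀ m, n ≤ m → ∀ β ∈ B, f β m ≤ f γ m := by
    intro B
    by_cases h : ∃ γ', ∃ n, ∀ m, n ≤ m → ∀ β ∈ B, f β m ≤ f γ' m
    · obtain ⟨γ, hγ⟩ := h
      exact ⟨γ, fun _ => hγ⟩
    · exact ⟨Classical.arbitrary P, fun h' => absurd h' h⟩
  choose Γ hΓ using hΓ
  let Z : (WO σ → P) → WO σ → P := fun x y => L (x '' Iio y)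
  have hZloc : ∀ (x x' : WO σ → P) (y : WO σ), (∀ z < y, x z = x' z) →
      ∀ w ≤ y, Z x w = Z x' w := by
    intro x x' y h w hw
    have : x '' Iio w = x' '' Iio w := image_congr (fun z hz => h z (lt_of_lt_of_le hz hw))
    simp only [Z, this]
  obtain ⟨x, hx⟩ := rec_exists (Q := WO σ) (P := P)
    (fun x y p => p ∈ X ∧ Z x y < p ∧ ∀ α, Γ (Z x '' (C α ∩ Iic y)) < p)
    (by
      rintro x x' y p h ⟨h1, h2, h3⟩
      refine ⟨h1, ?_, fun α => ?_⟩
      · rwa [← hZloc x x' y h y le_rfl]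
      · have : Z x '' (C α ∩ Iic y) = Z x' '' (C α ∩ Iic y) :=
          image_congr (fun w hw => hZloc x x' y h w hw.2)
        rw [← this]
        exact h3 α)
    (by
      intro x y
      obtain ⟨b, hb⟩ := H.bdd (insert (Z x y) (range (fun α => Γ (Z x '' (C α ∩ Iic y))))) (by
        refine (mk_insert_le).trans (add_le_of_le H.aleph ?_ (one_le_aleph0.trans H.aleph))
        exact mk_range_le.trans (by simpa using hθκ.le))
      obtain ⟨p, hp, hbp⟩ := hX b
      exact ⟨p, hp, (hb _ (mem_insert _ _)).trans hbp,
        fun α => (hb _ (mem_insert_of_mem _ ⟨α, rfl⟩)).trans hbp⟩)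
  set ζ : WO σ → P := Z x with hζdef
  have hζ : ∀ y, IsLUB (x '' Iio y) (ζ y) := fun y => hL _ (mk_image_le.trans
    (((mk_Iio_toType_ord_lt y).trans hθκ).le))
  have hxX : ∀ y, x y ∈ X := fun y => (hx y).1
  have hζx : ∀ y, ζ y < x y := fun y => (hx y).2.1
  have hΓx : ∀ y α, Γ (ζ '' (C α ∩ Iic y)) < x y := fun y => (hx y).2.2
  have hxζ : ∀ z y, z < y → x z ≤ ζ y := fun z y h => (hζ y).1 ⟨z, h, rfl⟩
  have hζm : StrictMono ζ := fun z y h => (hζx z).trans_le (hxζ z y h)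
  have hxm : StrictMono x := fun z y h => (hxζ z y h).trans_lt (hζx y)
  have hcont : ∀ (B : Set (WO σ)) q, IsLUB B q → B.Nonempty → IsLUB (ζ '' B) (ζ q) := by
    intro B q hq hne
    refine ⟨?_, fun p hp => ?_⟩
    · rintro _ ⟨b, hb, rfl⟩
      exact hζm.monotone (hq.1 hb)
    · refine (hζ q).2 ?_
      rintro _ ⟨z, hz, rfl⟩
      obtain ⟨b, hb, hzb⟩ := (lt_isLUB_iff hq).1 hz
      exact (hxζ z b hzb).trans (hp ⟨b, hb, rfl⟩)
  -- the point `δ`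
  obtain ⟨δ, hδ⟩ : ∃ δ, IsLUB (range ζ) δ :=
    ⟨_, hL _ (mk_range_le.trans (by simpa using hθκ.le))⟩
  have hζδ : ∀ y, ζ y < δ := by
    intro y
    obtain ⟨z, hz⟩ := wo_gt hσ y
    exact (hζm hz).trans_le (hδ.1 ⟨z, rfl⟩)
  obtain ⟨E, ⟨hE1, hE2, hE3⟩, n1, hn1⟩ := H.club δ ⟨range ζ, ⟨by
      rintro _ ⟨y, rfl⟩
      exact hζδ y, by
      intro p hp
      exact (lt_isLUB_iff hδ).1 hp, by
      intro B hB hne p hp hBp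
      have hBim : ζ '' (ζ ⁻¹' B) = B := image_preimage_eq_of_subset hB
      obtain ⟨_, ⟨y, rfl⟩, hy⟩ := (lt_isLUB_iff hδ).1 hp
      obtain ⟨q, hq⟩ := exists_lub (ζ ⁻¹' B) ⟨y, fun z hz =>
        (hζm.lt_iff_lt.1 ((hBp.1 hz).trans_lt hy)).le⟩
      have hne' : (ζ ⁻¹' B).Nonempty := by
        rw [← hBim] at hne
        exact hne.of_image
      have := hcont _ q hq hne'
      rw [hBim] at this
      exact ⟨q, this.unique hBp⟩⟩, (mk_range_le.trans_lt (by simpa using hθκ))⟩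
  have hEclub : IsClub (ζ ⁻¹' E) := by
    constructor
    · rw [DirSupClosed]
      intro B hB hne _ q hq
      exact hE3 (ζ '' B) (by rintro _ ⟨b, hb, rfl⟩; exact hB hb) (hne.image _) _ (hζδ q)
        (hcont B q hq hne)
    · intro q0
      have hstep : ∀ q : WO σ, ∃ q' : WO σ, ∃ p ∈ E, ζ q < p ∧ p < ζ q' := by
        intro q
        obtain ⟨p, hp, hqp⟩ := hE2 (ζ q) (hζδ q)
        obtain ⟨_, ⟨q', rfl⟩, hq'⟩ := (lt_isLUB_iff hδ).1 (hE1 hp)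
        exact ⟨q', p, hp, hqp, hq'⟩
      choose nx pp hppE hlt1 hlt2 using hstep
      let s : ℕ → WO σ := fun n => nx^[n] q0
      have hs : ∀ n, s (n + 1) = nx (s n) := fun n => Function.iterate_succ_apply' nx n q0
      obtain ⟨q, hq⟩ : ∃ q, IsLUB (range s) q := by
        have hcnt : #(range s) < σ := ((countable_range s).le_aleph0).trans_lt hσ0
        obtain ⟨b, hb⟩ := wo_bdd hσ _ hcnt
        exact exists_lub _ ⟨b, fun z hz => (hb z hz).le⟩
      refine ⟨q, ?_, hq.1 ⟨0, rfl⟩⟩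
      have hl := hcont _ q hq (range_nonempty _)
      refine hE3 (range (fun n => pp (s n))) (by rintro _ ⟨n, rfl⟩; exact hppE _)
        (range_nonempty _) _ (hζδ q) ⟨?_, fun b hb => hl.2 ?_⟩
      · rintro _ ⟨n, rfl⟩
        exact (hlt2 (s n)).le.trans (by rw [← hs]; exact hl.1 ⟨_, ⟨n + 1, rfl⟩, rfl⟩)
      · rintro _ ⟨_, ⟨n, rfl⟩, rfl⟩
        exact (hlt1 (s n)).le.trans (hb ⟨n, rfl⟩)
  obtain ⟨α, hα1, hα2⟩ := hC _ hEclub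
  have hΓα : ∀ y, ∃ n, ∀ m, n ≤ m → ∀ z ∈ C α, z ≤ y → f (ζ z) m ≤ f (Γ (ζ '' (C α ∩ Iic y))) m := by
    intro y
    obtain ⟨n, hn⟩ := hΓ (ζ '' (C α ∩ Iic y)) ⟨δ, n1, by
      rintro m hm _ ⟨z, hz, rfl⟩
      exact (hn1 m hm _ (hα1 hz.1)).le⟩
    exact ⟨n, fun m hm z hz hzy => hn m hm _ ⟨z, ⟨hz, hzy⟩, rfl⟩⟩
  obtain ⟨e, he, heC⟩ := wo_embed (c := θ) (C α) hα2
  obtain ⟨sc, hsc1, hsc2⟩ := wo_succ hθ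
  have hN : ∀ ξ, ∃ n, ∀ m, n ≤ m → f (x (e ξ)) m ≤ f (ζ (e (sc ξ))) m ∧
      (∀ z ∈ C α, z ≤ e ξ → f (ζ z) m ≤ f (Γ (ζ '' (C α ∩ Iic (e ξ)))) m) ∧
      f (Γ (ζ '' (C α ∩ Iic (e ξ)))) m < f (x (e ξ)) m := by
    intro ξ
    obtain ⟨a, ha⟩ := H.mono_le _ _ (hxζ _ _ (he (hsc1 ξ)))
    obtain ⟨b, hb⟩ := hΓα (e ξ)
    obtain ⟨c, hc⟩ := H.mono _ _ (hΓx (e ξ) α)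
    refine ⟨max a (max b c), fun m hm => ?_⟩
    simp only [max_le_iff] at hm
    exact ⟨ha m hm.1, hb m hm.2.1, hc m hm.2.2⟩
  choose N hN using hN
  obtain ⟨n0, hn0⟩ := wo_pigeon hθ hA N
  obtain ⟨e', he', heD⟩ := wo_embed (c := θ) _ hn0
  refine ⟨fun ξ => x (e (e' ξ)), hxm.comp (he.comp he'), fun ξ => hxX _, n0, ?_⟩
  intro ξ η hξη m hm
  have h1 := hN (e' ξ) m (by rw [show N (e' ξ) = n0 from heD ξ]; exact hm)
  have h2 := hN (e' η) m (by rw [show N (e' η) = n0 from heD η]; exact hm)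
  have h3 := h2.2.1 _ (heC (sc (e' ξ))) (he.monotone (hsc2 _ _ (he' hξη)))
  exact (h1.1.trans h3).trans_lt h2.2.2

theorem closure_pt {P A : Type v} [LinearOrder P] [WellFoundedLT P] [Nonempty P]
    [LinearOrder A] {κ : Cardinal.{v}} {f : P → A → Ordinal.{v}} {g0 : A → Ordinal.{v}}
    (H : Sys κ f g0) (R : P → P → Prop) (h1 : ∀ β, ∃ γ, R β γ)
    (h2 : ∀ β γ γ', R β γ → γ ≤ γ' → R β γ') :
    ∃ X : Set P, (∀ p, ∃ x ∈ X, p < x) ∧ ∀ x ∈ X, ∀ y ∈ X, x < y → R x y := by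
  choose φ hφ using h1
  obtain ⟨x, hx⟩ := rec_exists (Q := P) (P := P)
    (fun x y p => ∀ z < y, x z < p ∧ R (x z) p)
    (by
      intro x x' y p h h1 z hz
      rw [← h z hz]
      exact h1 z hz)
    (by
      intro x y
      obtain ⟨b, hb⟩ := H.bdd (x '' Iio y) (mk_image_le.trans (H.seg y))
      obtain ⟨b', hb'⟩ := H.bdd ((fun z => φ (x z)) '' Iio y) (mk_image_le.trans (H.seg y))
      exact ⟨max b b', fun z hz => ⟨lt_max_of_lt_left (hb _ ⟨z, hz, rfl⟩),
        h2 _ _ _ (hφ (x z)) (le_max_of_le_right (hb' _ ⟨z, hz, rfl⟩).le)⟩⟩)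
  have hm : StrictMono x := fun z y h => (hx y z h).1
  refine ⟨range x, fun p => ?_, ?_⟩
  · obtain ⟨b, hb⟩ := H.bdd {p} (by rw [mk_singleton]; exact one_le_aleph0.trans H.aleph)
    exact ⟨x b, ⟨b, rfl⟩, (hb p rfl).trans_le hm.le_apply⟩
  · rintro _ ⟨z, rfl⟩ _ ⟨y, rfl⟩ h
    exact (hx y z (hm.lt_iff_lt.1 h)).2

/-- The least element of `T` above `x`. -/
noncomputable def projO (T : Set Ordinal.{v}) (x : Ordinal.{v}) : Ordinal.{v} :=
  sInf {s | s ∈ T ∧ x ≤ s}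

theorem projO_spec (T : Set Ordinal.{v}) (x : Ordinal.{v}) (h : ∃ s ∈ T, x ≤ s) :
    projO T x ∈ T ∧ x ≤ projO T x := by
  obtain ⟨s, hs⟩ := h
  exact csInf_mem (s := {s | s ∈ T ∧ x ≤ s}) ⟨s, hs⟩

theorem projO_le (T : Set Ordinal.{v}) (x s : Ordinal.{v}) (h : s ∈ T) (hx : x ≤ s) :
    projO T x ≤ s := csInf_le' (s := {s | s ∈ T ∧ x ≤ s}) ⟨h, hx⟩

/-- `h` is an upper bound of the sequence modulo bounded sets. -/
def UB {P A : Type v} [LinearOrder A] (f : P → A → Ordinal.{v}) (h : A → Ordinal.{v}) : Prop :=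
  ∀ γ, ∃ n, ∀ m, n ≤ m → f γ m ≤ h m

theorem bpp {P A : Type v} [LinearOrder P] [WellFoundedLT P] [Nonempty P]
    [LinearOrder A] [Nonempty A]
    {κ : Cardinal.{v}} {f : P → A → Ordinal.{v}} {g0 : A → Ordinal.{v}} (H : Sys κ f g0)
    {θ : Cardinal.{v}} (hθ : θ.IsRegular) (hA : #A < θ) (hstar : StarP f θ)
    {ι : Type v} (hι : #ι < θ) (y : A → ι → Ordinal.{v}) (T : A → Set Ordinal.{v})
    (hT : ∀ a, T a ⊆ range (y a)) (hub : ∀ γ, ∃ n, ∀ m, n ≤ m → ∃ s ∈ T m, f γ m ≤ s) :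
    ∃ β, UB f (fun m => projO (T m) (f β m)) := by
  by_contra hcon
  have hR : ∀ β, ∃ γ, ∀ n, ∃ m, n ≤ m ∧ projO (T m) (f β m) < f γ m := by
    intro β
    by_contra h
    refine hcon ⟨β, fun γ => ?_⟩
    by_contra h'
    push Not at h'
    exact h ⟨γ, h'⟩
  obtain ⟨X, hX1, hX2⟩ := closure_pt H
    (fun β γ => ∀ n, ∃ m, n ≤ m ∧ projO (T m) (f β m) < f γ m) hR (by
      intro β γ γ' h hle n
      obtain ⟨n', hn'⟩ := H.mono_le _ _ hle
      obtain ⟨m, hm, hm2⟩ := h (max n n')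
      exact ⟨m, (le_max_left _ _).trans hm, hm2.trans_le (hn' m ((le_max_right _ _).trans hm))⟩)
  obtain ⟨e, he, heX, n0, hn0⟩ := hstar X hX1
  obtain ⟨sc, hsc1, hsc2⟩ := wo_succ hθ
  have hM : ∀ ξ, ∃ m, n0 ≤ m ∧ projO (T m) (f (e ξ) m) < f (e (sc ξ)) m ∧
      ∃ s ∈ T m, f (e ξ) m ≤ s := by
    intro ξ
    obtain ⟨n, hn⟩ := hub (e ξ)
    obtain ⟨m, hm, hm2⟩ := hX2 _ (heX ξ) _ (heX (sc ξ)) (he (hsc1 ξ)) (max n0 n)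
    exact ⟨m, (le_max_left _ _).trans hm, hm2, hn m ((le_max_right _ _).trans hm)⟩
  choose M hM1 hM2 hM3 using hM
  obtain ⟨m, hm⟩ := wo_pigeon hθ hA M
  have ht : ∀ ξ : {ξ | M ξ = m}, ∃ t, y m t = projO (T m) (f (e ξ.1) m) := by
    rintro ⟨ξ, rfl⟩
    exact hT _ (projO_spec _ _ (hM3 ξ)).1
  choose t ht using ht
  have hlt : ∀ ξ η : {ξ | M ξ = m}, ξ < η → y m (t ξ) < y m (t η) := by
    rintro ⟨ξ, hξ⟩ ⟨η, hη⟩ h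
    rw [ht, ht]
    have h' : ξ < η := h
    have hξ' : M ξ = m := hξ
    have hη' : M η = m := hη
    have h1 := hM2 ξ
    have h2 := (projO_spec _ _ (hM3 η)).2
    have h4 := hM1 ξ
    rw [hξ'] at h1 h4
    rw [hη'] at h2
    have h3 : f (e (sc ξ)) m ≤ f (e η) m := by
      rcases (hsc2 _ _ h').eq_or_lt with h5 | h5
      · rw [h5]
      · exact (hn0 _ _ h5 m h4).le
    exact h1.trans_le (h3.trans h2)
  have hinj : Function.Injective t := by
    intro ξ η h
    rcases lt_trichotomy ξ η with h' | h' | h'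
    · exact absurd (hlt _ _ h') (by rw [h]; exact lt_irrefl _)
    · exact h'
    · exact absurd (hlt _ _ h') (by rw [h]; exact lt_irrefl _)
  exact absurd (hm.trans (mk_le_of_injective hinj)) (not_le.2 hι)

theorem exists_lub_fun {P A : Type v} [LinearOrder P] [WellFoundedLT P] [Nonempty P]
    [LinearOrder A] [Nonempty A]
    {κ : Cardinal.{v}} {f : P → A → Ordinal.{v}} {g0 : A → Ordinal.{v}} (H : Sys κ f g0)
    {ρ : Cardinal.{v}} (hρ : ρ.IsRegular) (hA : #A < ρ) (hρκ : ρ ≤ κ)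
    (hstar : StarP f (Order.succ ρ)) :
    ∃ g, UB f g ∧ ∀ h, UB f h → ∃ n, ∀ m, n ≤ m → g m ≤ h m := by
  classical
  by_contra hcon
  have hno : ∀ g, UB f g → ∃ h, UB f h ∧ ∀ n, ∃ m, n ≤ m ∧ h m < g m := by
    intro g hg
    by_contra! h'
    exact hcon ⟨g, hg, h'⟩
  have hθ : (Order.succ ρ).IsRegular := isRegular_succ hρ.aleph0_le
  have := wo_nonempty hρ
  let T : (WO ρ → (A → Ordinal.{v}) × P) → WO ρ → A → Set Ordinal.{v} := fun u α a =>
    {s | s = g0 a ∨ ∃ z < α, s = (u z).1 a}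
  have hTloc : ∀ u u' α, (∀ z < α, u z = u' z) → T u α = T u' α := by
    intro u u' α h
    funext a
    ext s
    simp only [T, mem_ofPred_eq]
    refine or_congr Iff.rfl (exists_congr fun z => and_congr_right fun hz => ?_)
    rw [h z hz]
  have hTne : ∀ u α a γ, ∃ s ∈ T u α a, f γ a ≤ s := fun u α a γ =>
    ⟨g0 a, Or.inl rfl, (H.lt_g0 γ a).le⟩
  obtain ⟨u, hu⟩ := rec_exists (Q := WO ρ) (P := (A → Ordinal.{v}) × P)
    (fun u α p => UB f p.1 ∧ ∀ γ, p.2 ≤ γ → ∀ n, ∃ m, n ≤ m ∧ p.1 m < projO (T u α m) (f γ m))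
    (by
      rintro u u' α p h hp
      rwa [← hTloc u u' α h])
    (by
      intro u α
      obtain ⟨β, hβ⟩ := bpp H hθ (hA.trans (Order.lt_succ ρ)) hstar (ι := Option (WO ρ)) (by
          rw [mk_option, mk_toType, card_ord]
          exact (add_le_of_le hρ.aleph0_le le_rfl
            (one_le_aleph0.trans hρ.aleph0_le)).trans_lt (Order.lt_succ ρ))
        (fun a t => t.elim (g0 a) (fun z => (u z).1 a)) (T u α) (by
          rintro a s (rfl | ⟨z, -, rfl⟩)
          · exact ⟨none, rfl⟩
          · exact ⟨some z, rfl⟩)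
        (fun γ => ⟨Classical.arbitrary A, fun m _ => hTne u α m γ⟩)
      obtain ⟨h, hh1, hh2⟩ := hno _ hβ
      refine ⟨(h, β), hh1, fun γ hγ n => ?_⟩
      obtain ⟨n', hn'⟩ := H.mono_le _ _ hγ
      obtain ⟨m, hm, hm2⟩ := hh2 (max n n')
      refine ⟨m, (le_max_left _ _).trans hm, hm2.trans_le ?_⟩
      have hs := projO_spec _ _ (hTne u α m γ)
      exact projO_le _ _ _ hs.1 ((hn' m ((le_max_right _ _).trans hm)).trans hs.2))
  obtain ⟨β, hβ⟩ := H.bdd (range (fun α => (u α).2)) (mk_range_le.trans (by simpa using hρκ))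
  have hstab : ∀ a, ∃ α, ∀ α', α ≤ α' → projO (T u α' a) (f β a) = projO (T u α a) (f β a) := by
    intro a
    refine antitone_stab (fun α => projO (T u α a) (f β a)) (fun α α' hle => ?_)
    have hs := projO_spec _ _ (hTne u α a β)
    refine projO_le _ _ _ ?_ hs.2
    rcases hs.1 with h | ⟨z, hz, h⟩
    · exact Or.inl h
    · exact Or.inr ⟨z, hz.trans_le hle, h⟩
  choose st hst using hstab
  obtain ⟨α, hα⟩ := wo_bdd hρ (range st) (mk_range_le.trans_lt hA)
  obtain ⟨α', hα'⟩ := wo_gt hρ α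
  obtain ⟨n, hn⟩ := (hu α).1 β
  obtain ⟨m, hm, hm2⟩ := (hu α).2 β (hβ _ ⟨α, rfl⟩).le n
  have h1 := hα _ ⟨m, rfl⟩
  rw [hst m α h1.le, ← hst m α' (h1.trans hα').le] at hm2
  exact absurd hm2 (not_lt.2 (projO_le _ _ _ (Or.inr ⟨α, hα', rfl⟩) (hn m hm)))

theorem main_contra {S : Type u} (U : Ultrafilter S) {P A : Type v} [LinearOrder P]
    [WellFoundedLT P] [Nonempty P] [LinearOrder A] [WellFoundedLT A] [Nonempty A]
    {κ : Cardinal.{v}} {f : P → A → Ordinal.{v}} {g0 : A → Ordinal.{v}} (H : Sys κ f g0)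
    (hlim : ∀ c < κ, Order.succ c < κ) (hAκ : #A < κ) (hg0 : ∀ a, g0 a ≤ κ.ord)
    (hκ : ℵ₀ < κ)
    (i : S → A) (hi : ∀ n, ∀ᶠ s in (U : Filter S), n ≤ i s)
    (r : S → P) (hr : ∀ β, ∀ᶠ s in (U : Filter S), β < r s)
    (hind : ∀ x : S → WO κ, ∃ X : Set (WO κ), #X < κ ∧ ∀ᶠ s in (U : Filter S), x s ∈ X)
    {μ : Cardinal.{v}} (hμ : μ.IsRegular) (hμA : #A < μ) (hμκ : μ < κ)
    (hμind : ∀ x : S → WO μ, ∃ ξ, ∀ᶠ s in (U : Filter S), x s ≤ ξ) : False := by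
  classical
  have hstar : ∀ θ : Cardinal.{v}, θ.IsRegular → #A < θ → θ < κ → StarP f θ :=
    fun θ h1 h2 h3 => star_of_sys H h1 h2 (hlim _ (hlim _ h3))
  have hI : ∀ β s, ∃ n, β < r s → (i s ≤ n ∧ ∀ m, n ≤ m → f β m < f (r s) m) ∧
      ∀ n', (i s ≤ n' ∧ ∀ m, n' ≤ m → f β m < f (r s) m) → n ≤ n' := by
    intro β s
    by_cases h : β < r s
    · obtain ⟨n, hn⟩ := H.mono _ _ h
      obtain ⟨n', hn'⟩ := exists_least
        (fun n => i s ≤ n ∧ ∀ m, n ≤ m → f β m < f (r s) m)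
        ⟨max (i s) n, le_max_left _ _, fun m hm => hn m ((le_max_right _ _).trans hm)⟩
      exact ⟨n', fun _ => hn'⟩
    · exact ⟨i s, fun h' => absurd h' h⟩
  choose I hI using hI
  have hImono : ∀ β γ s n, (∀ m, n ≤ m → f β m < f γ m) → β < r s → γ < r s → n ≤ i s →
      I β s ≤ I γ s := by
    intro β γ s n hn hβ hγ hni
    have h1 := (hI γ s hγ).1
    exact (hI β s hβ).2 _ ⟨h1.1, fun m hm =>
      (hn m (hni.trans (h1.1.trans hm))).trans (h1.2 m hm)⟩
  have hIae : ∀ β γ, β ≤ γ → ∀ᶠ s in (U : Filter S), I β s ≤ I γ s := by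
    intro β γ h
    rcases h.eq_or_lt with rfl | h
    · exact Filter.Eventually.of_forall (fun s => le_rfl)
    · obtain ⟨n, hn⟩ := H.mono _ _ h
      filter_upwards [hr β, hr γ, hi n] with s h1 h2 h3
      exact hImono β γ s n hn h1 h2 h3
  have hβ0 : ∃ β0, ∀ β, ∀ᶠ s in (U : Filter S), I β s ≤ I β0 s := by
    by_contra hcon
    push Not at hcon
    obtain ⟨X, hX1, hX2⟩ := closure_pt H
      (fun β γ => ∀ᶠ s in (U : Filter S), I β s < I γ s)
      hcon
      (by
        intro β γ γ' h hle
        filter_upwards [h, hIae _ _ hle] with s h1 h2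
        exact h1.trans_le h2)
    obtain ⟨e, he, heX, n0, hn0⟩ := hstar μ hμ hμA hμκ X hX1
    obtain ⟨b, hb⟩ := H.bdd (range e) (mk_range_le.trans (by simpa using hμκ.le))
    have hx : ∀ s, ∃ x : WO μ, n0 ≤ i s → b < r s → ∀ y, x ≤ y → I (e y) s = I (e x) s := by
      intro s
      by_cases h : n0 ≤ i s ∧ b < r s
      · have hlt : ∀ ξ, e ξ < r s := fun ξ => (hb _ ⟨ξ, rfl⟩).trans h.2
        obtain ⟨x, hx⟩ := monotone_stab hμ hμA (fun ξ => I (e ξ) s) (by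
          intro ξ η hle
          rcases hle.eq_or_lt with rfl | hl
          · exact le_rfl
          · exact hImono _ _ s n0 (hn0 _ _ hl) (hlt _) (hlt _) h.1)
        exact ⟨x, fun _ _ => hx⟩
      · exact ⟨(wo_nonempty hμ).some, fun h1 h2 => absurd ⟨h1, h2⟩ h⟩
    choose x hx using hx
    obtain ⟨ξ, hξ⟩ := hμind x
    obtain ⟨η, hη⟩ := wo_gt hμ ξ
    obtain ⟨s, h1, h2, h3, h4⟩ := (((hX2 _ (heX ξ) _ (heX η) (he hη)).and
      (hξ.and ((hi n0).and (hr b))))).exists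
    rw [hx s h3 h4 ξ h2, hx s h3 h4 η (h2.trans hη.le)] at h1
    exact lt_irrefl _ h1
  obtain ⟨β0, hβ0⟩ := hβ0
  -- the least upper bound
  have hm0 : max ℵ₀ #A < κ := max_lt hκ hAκ
  obtain ⟨g, hg1, hg2⟩ := exists_lub_fun H (ρ := Order.succ (max ℵ₀ #A))
    (isRegular_succ (le_max_left _ _)) ((le_max_right _ _).trans_lt (Order.lt_succ _))
    (hlim _ hm0).le
    (hstar _ (isRegular_succ ((le_max_left _ _).trans (Order.le_succ _)))
      (((le_max_right _ _).trans_lt (Order.lt_succ _)).trans (Order.lt_succ _))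
      (hlim _ (hlim _ hm0)))
  have hN : ∀ s, ∃ n, ∀ m, n ≤ m → f (r s) m < g m := by
    intro s
    obtain ⟨b, hb⟩ := H.bdd {r s} (by rw [mk_singleton]; exact one_le_aleph0.trans H.aleph)
    obtain ⟨n, hn⟩ := H.mono _ _ (hb _ rfl)
    obtain ⟨n', hn'⟩ := hg1 b
    exact ⟨max n n', fun m hm => (hn m ((le_max_left _ _).trans hm)).trans_le
      (hn' m ((le_max_right _ _).trans hm))⟩
  choose N hN using hN
  let F : S → A := fun s => max (I β0 s) (N s)
  have hxlt : ∀ s, f (r s) (F s) < κ.ord := fun s => (H.lt_g0 _ _).trans_le (hg0 _)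
  obtain ⟨X, hXκ, hX⟩ := hind (fun s => Ordinal.ToType.mk ⟨f (r s) (F s), hxlt s⟩)
  let y : WO κ → Ordinal.{v} := fun t => (Ordinal.ToType.toOrd t).1
  let T : A → Set Ordinal.{v} := fun a => {s | s = g a ∨ ∃ t ∈ X, s = y t}
  have hm1 : max (max ℵ₀ #A) #X < κ := max_lt hm0 hXκ
  have hle0 : ℵ₀ ≤ max (max ℵ₀ #A) #X := (le_max_left _ _).trans (le_max_left _ _)
  obtain ⟨β, hβ⟩ := bpp H (θ := Order.succ (max (max ℵ₀ #A) #X)) (isRegular_succ hle0)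
    (((le_max_right _ _).trans (le_max_left _ _)).trans_lt (Order.lt_succ _))
    (hstar _ (isRegular_succ hle0)
      (((le_max_right _ _).trans (le_max_left _ _)).trans_lt (Order.lt_succ _)) (hlim _ hm1))
    (ι := Option X) (by
      rw [mk_option]
      exact (add_le_of_le hle0 (le_max_right _ _) (one_le_aleph0.trans hle0)).trans_lt
        (Order.lt_succ _))
    (fun a t => t.elim (g a) (fun z => y z.1)) T (by
      rintro a s (rfl | ⟨t, ht, rfl⟩)
      · exact ⟨none, rfl⟩
      · exact ⟨some ⟨t, ht⟩, rfl⟩)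
    (by
      intro γ
      obtain ⟨n, hn⟩ := hg1 γ
      exact ⟨n, fun m hm => ⟨g m, Or.inl rfl, hn m hm⟩⟩)
  obtain ⟨n1, hn1⟩ := hg2 _ hβ
  obtain ⟨s, h1, h2, h3, h4, h5⟩ := ((hβ0 β).and ((hr β).and ((hr β0).and
    ((hi n1).and hX)))).exists
  have hF0 : I β0 s ≤ F s := le_max_left _ _
  have hFn : n1 ≤ F s := h4.trans ((hI β0 s h3).1.1.trans hF0)
  have hlt := (hI β s h2).1.2 (F s) (h1.trans hF0)
  have hmem : f (r s) (F s) ∈ T (F s) := by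
    refine Or.inr ⟨_, h5, ?_⟩
    simp [y]
  have h6 := projO_le _ _ _ hmem hlt.le
  have h7 := hN s (F s) (le_max_right _ _)
  exact absurd ((hn1 _ hFn).trans h6) (not_le.2 h7)

/-! ### Construction of the sequence -/

theorem exists_T {P A : Type v} [LinearOrder P] [LinearOrder A] {κ : Cardinal.{v}}
    (seg : ∀ y : P, #(Iio y) ≤ κ) (lv : A → Set (WO κ)) (lvmono : ∀ a b, a ≤ b → lv a ⊆ lv b)
    (lvcov : ∀ x, ∃ a, x ∈ lv a) (k : A → Cardinal.{v}) (kmono : ∀ a b, a ≤ b → k a ≤ k b)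
    (hk : ∀ a, ℵ₀ ≤ k a) (hlv : ∀ a, #(lv a) ≤ k a) (hkc : ∀ c < κ, ∃ a, c ≤ k a) :
    ∃ T : P → A → Set P, (∀ δ a, T δ a ⊆ Iio δ) ∧ (∀ δ a b, a ≤ b → T δ a ⊆ T δ b) ∧
      (∀ β δ, β < δ → ∃ a, β ∈ T δ a) ∧ (∀ δ a, #(T δ a) ≤ k a) ∧
      (∀ δ : P, (∃ E, ClubBelow δ E ∧ #E < κ) → ∃ E, ClubBelow δ E ∧ ∃ n, E ⊆ T δ n) := by
  classical
  have hj : ∀ δ : P, ∃ j : Iio δ → WO κ, Function.Injective j := by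
    intro δ
    have h := seg δ
    rw [show κ = #(WO κ) by simp] at h
    obtain ⟨j⟩ := h
    exact ⟨j, j.injective⟩
  choose j hj using hj
  have hE : ∀ δ : P, ∃ E : Set P, E ⊆ Iio δ ∧ #E ≤ κ ∧
      ((∃ E', ClubBelow δ E' ∧ #E' < κ) → ClubBelow δ E ∧ #E < κ) := by
    intro δ
    by_cases h : ∃ E', ClubBelow δ E' ∧ #E' < κ
    · obtain ⟨E, hE, hEκ⟩ := h
      exact ⟨E, hE.1, hEκ.le, fun _ => ⟨hE, hEκ⟩⟩
    · exact ⟨∅, empty_subset _, by simp, fun h' => absurd h' h⟩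
  choose E hE1 hE2 hE3 using hE
  refine ⟨fun δ a => (Subtype.val '' (j δ ⁻¹' lv a)) ∪ {β | β ∈ E δ ∧ #(E δ) ≤ k a},
    ?_, ?_, ?_, ?_, ?_⟩
  · rintro δ a β (⟨x, -, rfl⟩ | h)
    · exact x.2
    · exact hE1 δ h.1
  · rintro δ a b hab β (⟨x, hx, rfl⟩ | h)
    · exact Or.inl ⟨x, lvmono a b hab hx, rfl⟩
    · exact Or.inr ⟨h.1, h.2.trans (kmono a b hab)⟩
  · intro β δ h
    obtain ⟨a, ha⟩ := lvcov (j δ ⟨β, h⟩)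
    exact ⟨a, Or.inl ⟨⟨β, h⟩, ha, rfl⟩⟩
  · intro δ a
    refine (mk_union_le _ _).trans (add_le_of_le (hk a) ?_ ?_)
    · exact mk_image_le.trans ((mk_preimage_of_injective _ _ (hj δ)).trans (hlv a))
    · by_cases h : #(E δ) ≤ k a
      · exact (mk_le_mk_of_subset (fun β hβ => hβ.1)).trans h
      · have : {β | β ∈ E δ ∧ #(E δ) ≤ k a} = (∅ : Set P) := by
          ext β
          simp [h]
        rw [this]
        simp
  · intro δ h
    obtain ⟨h1, h2⟩ := hE3 δ h
    obtain ⟨a, ha⟩ := hkc _ h2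
    exact ⟨E δ, h1, a, fun β hβ => Or.inr ⟨hβ, ha⟩⟩

theorem exists_f {P A : Type v} [LinearOrder P] [WellFoundedLT P] (k : A → Cardinal.{v})
    (hk : ∀ a, ℵ₀ ≤ k a) (T : P → A → Set P) (hT : ∀ δ a, T δ a ⊆ Iio δ)
    (hTk : ∀ δ a, #(T δ a) ≤ k a) :
    ∃ f : P → A → Ordinal.{v}, (∀ β δ a, β ∈ T δ a → f β a < f δ a) ∧
      ∀ δ a, f δ a < (Order.succ (k a)).ord := by
  have hwf : ∀ a, IsWellFounded P (fun β δ => β ∈ T δ a) := fun a =>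
    ⟨Subrelation.wf (r := (· < ·)) (fun h => hT _ _ h) wellFounded_lt⟩
  refine ⟨fun δ a => IsWellFounded.rank (fun β δ => β ∈ T δ a) δ, fun β δ a h =>
    IsWellFounded.rank_lt_of_rel h, fun δ a => ?_⟩
  have hreg : (Order.succ (k a)).IsRegular := isRegular_succ (hk a)
  induction δ using WellFoundedLT.induction with
  | ind δ ih =>
    beta_reduce at ih ⊢
    rw [IsWellFounded.rank_eq]
    refine Ordinal.iSup_add_one_lt_of_lt_cof ?_ (fun b => ih b.1 (hT _ _ b.2))
    rw [hreg.cof_ord]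
    exact (hTk δ a).trans_lt (Order.lt_succ _)

/-! ### Decomposability -/

theorem decomp_of_fun {S : Type u} (U : Ultrafilter S) {μ : Cardinal.{v}} (x : S → WO μ)
    (h : ∀ X : Set (WO μ), #X < μ → ¬ ∀ᶠ s in (U : Filter S), x s ∈ X) : Decomposable U μ := by
  have he : #(WO μ) = #μ.out := by simp
  obtain ⟨e⟩ := Cardinal.eq.1 he
  refine ⟨fun s => e (x s), fun X hX hU => h (e ⁻¹' X) ?_ hU⟩
  exact (mk_preimage_of_injective _ _ e.injective).trans_lt hX

theorem fun_of_decomp {S : Type u} (U : Ultrafilter S) {μ : Cardinal.{v}}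
    (h : Decomposable U μ) : ∃ x : S → WO μ,
      ∀ X : Set (WO μ), #X < μ → ¬ ∀ᶠ s in (U : Filter S), x s ∈ X := by
  have he : #μ.out = #(WO μ) := by simp
  obtain ⟨e⟩ := Cardinal.eq.1 he
  obtain ⟨f, hf⟩ := h
  refine ⟨fun s => e (f s), fun X hX hU => hf (e ⁻¹' X) ?_ hU⟩
  exact (mk_preimage_of_injective _ _ e.injective).trans_lt hX

theorem decomp_of_unbdd {S : Type u} (U : Ultrafilter S) {μ : Cardinal.{v}} (hμ : μ.IsRegular)
    (x : S → WO μ) (h : ∀ ξ, ∀ᶠ s in (U : Filter S), ξ < x s) : Decomposable U μ := by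
  refine decomp_of_fun U x (fun X hX hU => ?_)
  obtain ⟨b, hb⟩ := wo_bdd hμ X hX
  obtain ⟨s, h1, h2⟩ := (hU.and (h b)).exists
  exact absurd (hb _ h1) (not_lt.2 h2.le)

theorem ult_not {S : Type u} (U : Ultrafilter S) {p : S → Prop}
    (h : ¬ ∀ᶠ s in (U : Filter S), p s) : ∀ᶠ s in (U : Filter S), ¬ p s :=
  Ultrafilter.eventually_not.2 h

/-- For singular `κ`: a `κ⁺`-decomposable but `κ`-indecomposable ultrafilter is
almost `<κ`-decomposable. -/
theorem stmt17 {S : Type u} (κ : Cardinal.{v}) (hκ : ℵ₀ ≤ κ)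
    (hsing : κ.ord.cof < κ) (U : Ultrafilter S)
    (h1 : Decomposable U (Order.succ κ)) (h2 : ¬ Decomposable U κ) :
    ∃ l < κ, ∀ μ : Cardinal.{v}, μ.IsRegular → l < μ → μ < κ → Decomposable U μ := by
  classical
  have hlim : ∀ c < κ, Order.succ c < κ := by
    intro c hc
    refine lt_of_le_of_ne (Order.succ_le_of_lt hc) (fun h => ?_)
    rcases le_or_gt ℵ₀ c with hc0 | hc0
    · have := (isRegular_succ hc0).cof_ord
      rw [h] at this
      exact absurd hsing (by rw [this]; exact lt_irrefl _)
    · exact absurd hκ (not_le.2 (h ▸ isSuccLimit_aleph0.succ_lt hc0))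
  have hκ0 : ℵ₀ < κ := by
    refine lt_of_le_of_ne hκ (fun h => ?_)
    rw [← h, isRegular_aleph0.cof_ord] at hsing
    exact lt_irrefl _ hsing
  have hreg : (Order.succ κ).IsRegular := isRegular_succ hκ
  -- the sequence of cardinals
  obtain ⟨C, hC, hCcard⟩ := Order.exists_cof_eq (WO κ)
  rw [Ordinal.cof_toType] at hCcard
  have hAκ : #C < κ := by rw [hCcard]; exact hsing
  have hNe : Nonempty (WO κ) := by
    rw [← mk_ne_zero_iff]; simpa using (aleph0_pos.trans_le hκ).ne'
  have hAne : Nonempty C := by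
    obtain ⟨y, hy, -⟩ := hC hNe.some
    exact ⟨⟨y, hy⟩⟩
  let k : C → Cardinal.{v} := fun a => max ℵ₀ #(Iio a.1)
  have hkκ : ∀ a, k a < κ := fun a => max_lt hκ0 (mk_Iio_toType_ord_lt a.1)
  have hk0 : ∀ a, ℵ₀ ≤ k a := fun a => le_max_left _ _
  have hkmono : ∀ a b, a ≤ b → k a ≤ k b := fun a b hab =>
    max_le_max le_rfl (mk_le_mk_of_subset (Iio_subset_Iio hab))
  have hkc : ∀ c < κ, ∃ a, c ≤ k a := by
    intro c hc
    have hcκ : c.ord < Ordinal.type (α := WO κ) (· < ·) := by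
      rw [Ordinal.type_toType]
      exact ord_lt_ord.2 hc
    let x : WO κ := Ordinal.enum (α := WO κ) (· < ·) ⟨c.ord, hcκ⟩
    obtain ⟨y, hy, hxy⟩ := hC x
    refine ⟨⟨y, hy⟩, le_max_of_le_right ?_⟩
    have hxc : #(Iio x) = c := by
      have h3 : Ordinal.typein (α := WO κ) (· < ·) x = c.ord := Ordinal.typein_enum _ hcκ
      have h4 := congrArg Ordinal.card h3
      rw [card_ord, Ordinal.card_typein] at h4
      exact h4
    rw [← hxc]
    exact mk_le_mk_of_subset (Iio_subset_Iio hxy)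
  have hPne := wo_nonempty hreg
  have hseg : ∀ y : WO (Order.succ κ), #(Iio y) ≤ κ := fun y =>
    Order.lt_succ_iff.1 (mk_Iio_toType_ord_lt y)
  obtain ⟨T, hT1, hT2, hT3, hT4, hT5⟩ := exists_T (P := WO (Order.succ κ)) (A := C) hseg
    (fun a => Iic a.1) (fun a b hab => Iic_subset_Iic.2 hab)
    (fun x => by
      obtain ⟨y, hy, hxy⟩ := hC x
      exact ⟨⟨y, hy⟩, hxy⟩) k hkmono hk0
    (fun a => by
      rw [← Iio_insert]
      exact mk_insert_le.trans (add_le_of_le (hk0 a) (le_max_right _ _)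
        (one_le_aleph0.trans (hk0 a)))) hkc
  obtain ⟨f, hf1, hf2⟩ := exists_f k hk0 T hT1 hT4
  have H : Sys κ f (fun a => (Order.succ (k a)).ord) :=
    { aleph := hκ
      bdd := fun B hB => wo_bdd hreg B (Order.lt_succ_of_le hB)
      seg := hseg
      mono := by
        intro β δ h
        obtain ⟨n, hn⟩ := hT3 β δ h
        exact ⟨n, fun m hm => hf1 _ _ _ (hT2 δ n m hm hn)⟩
      club := by
        intro δ h
        obtain ⟨E, hE, n, hn⟩ := hT5 δ h
        exact ⟨E, hE, n, fun m hm β hβ => hf1 _ _ _ (hT2 δ n m hm (hn hβ))⟩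
      lt_g0 := hf2 }
  obtain ⟨r, hr⟩ := fun_of_decomp U h1
  have hr : ∀ β, ∀ᶠ s in (U : Filter S), β < r s := by
    intro β
    have hc : #(Iic β) < Order.succ κ := by
      rw [← Iio_insert]
      exact Order.lt_succ_of_le (mk_insert_le.trans (add_le_of_le hκ (hseg β)
        (one_le_aleph0.trans hκ)))
    filter_upwards [ult_not U (hr _ hc)] with s hs
    exact not_le.1 hs
  by_cases hi : ∃ i : S → C, ∀ n, ∀ᶠ s in (U : Filter S), n ≤ i s
  · obtain ⟨i, hi⟩ := hi
    by_contra! hcon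
    obtain ⟨μ, hμ, hμA, hμκ, hμd⟩ := hcon #C hAκ
    refine main_contra U H hlim hAκ (fun a => ord_le_ord.2 (hlim _ (hkκ a)).le) hκ0 i hi r hr
      (fun x => ?_) hμ hμA hμκ (fun x => ?_)
    · by_contra! h
      exact h2 (decomp_of_fun U x (fun X hX hU => by
        obtain ⟨s, hs1, hs2⟩ := ((h X hX).and hU).exists
        exact hs1 hs2))
    · by_contra! h
      exact hμd (decomp_of_unbdd U hμ x h)
  · -- the Kunen-Prikry case
    have hb : ∀ F : S → C, ∃ n, ∀ᶠ s in (U : Filter S), F s ≤ n := by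
      intro F
      by_contra! h
      exact hi ⟨F, fun n => (h n).mono (fun s hs => hs.le)⟩
    have hd : ∀ β, ∃ n, ∀ᶠ s in (U : Filter S), β ∈ T (r s) n := by
      intro β
      have : ∀ s, ∃ n, β < r s → β ∈ T (r s) n := by
        intro s
        by_cases h : β < r s
        · obtain ⟨n, hn⟩ := hT3 _ _ h
          exact ⟨n, fun _ => hn⟩
        · exact ⟨hAne.some, fun h' => absurd h' h⟩
      choose F hF using this
      obtain ⟨n, hn⟩ := hb F
      refine ⟨n, ?_⟩
      filter_upwards [hn, hr β] with s h3 h4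
      exact hT2 _ _ _ h3 (hF s h4)
    choose N hN using hd
    obtain ⟨n, hn⟩ := wo_pigeon hreg (hAκ.trans (Order.lt_succ κ)) N
    refine ⟨k n, hkκ n, fun μ hμ hkμ hμκ => ?_⟩
    obtain ⟨e, he, heN⟩ := wo_embed (c := μ) _ ((hμκ.trans (Order.lt_succ κ)).le.trans hn)
    have hx : ∀ s, ∃ b, ∀ ξ ∈ e ⁻¹' (T (r s) n), ξ < b := fun s =>
      wo_bdd hμ _ (((mk_preimage_of_injective _ _ he.injective).trans (hT4 _ _)).trans_lt hkμ)
    choose x hx using hx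
    refine decomp_of_unbdd U hμ x (fun ξ => ?_)
    filter_upwards [hN (e ξ)] with s hs
    rw [show N (e ξ) = n from heN ξ] at hs
    exact hx s ξ hs
end

section
/- For every infinite cardinal κ, u(κ) ≤ u(κ⁺)^{cf(κ)}. -/
open Cardinal Set

universe u v

theorem rec_exists_s18 {R : Type u} [LinearOrder R] [WellFoundedLT R] {W : Type v} [Nonempty W]
    (Ψ : R → (R → W) → W → Prop)
    (h1 : ∀ i p, ∃ w, Ψ i p w)
    (h2 : ∀ i p p' w, (∀ j < i, p j = p' j) → Ψ i p w → Ψ i p' w) :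
    ∃ ξ : R → W, ∀ i, Ψ i ξ (ξ i) := by
  classical
  let w0 : W := Classical.arbitrary W
  let F : (i : R) → ((j : R) → j < i → W) → W := fun i ih =>
    Classical.choose (h1 i (fun j => if h : j < i then ih j h else w0))
  let ξ : R → W := (wellFounded_lt (α := R)).fix F
  refine ⟨ξ, fun i => ?_⟩
  have e : ξ i = F i (fun j _ => ξ j) := WellFounded.fix_eq _ _ _
  rw [e]
  refine h2 i _ ξ _ ?_ (Classical.choose_spec (h1 i (fun j => if h : j < i then ξ j else w0)))
  intro j hj
  simp [hj]

structure Big (X : Type u) [LinearOrder X] (τ : Cardinal.{u}) : Prop where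
  inf : ℵ₀ ≤ τ
  small : ∀ x : X, #(Iio x) ≤ τ
  bdd : ∀ c : Set X, #c ≤ τ → ∃ x, ∀ y ∈ c, y < x

theorem toType_bdd {σ : Cardinal.{u}} (hσ : σ.IsRegular) (c : Set σ.ord.ToType) (hc : #c < σ) :
    ∃ x, ∀ y ∈ c, y < x := by
  by_contra hne
  push Not at hne
  have : IsCofinal c := hne
  have h := Order.cof_le this
  rw [Ordinal.cof_toType, hσ.cof_ord] at h
  exact absurd h (not_le.2 hc)

theorem toType_small {σ : Cardinal.{u}} (x : σ.ord.ToType) : #(Iio x) < σ := by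
  exact Cardinal.mk_Iio_toType_ord_lt x

theorem big_succ {τ : Cardinal.{u}} (h : ℵ₀ ≤ τ) : Big (Order.succ τ).ord.ToType τ where
  inf := h
  small x := Order.lt_succ_iff.1 (toType_small x)
  bdd c hc := toType_bdd (isRegular_succ h) c (Order.lt_succ_iff.2 hc)

section
variable {X : Type u} [LinearOrder X] [WellFoundedLT X] {τ : Cardinal.{u}}

theorem Big.nonempty {X : Type u} [LinearOrder X] {τ : Cardinal.{u}} (hB : Big X τ) : Nonempty X := by
  obtain ⟨x, -⟩ := hB.bdd ∅ (by simp)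
  exact ⟨x⟩

theorem Big.gt {X : Type u} [LinearOrder X] {τ : Cardinal.{u}} (hB : Big X τ) (x : X) : ∃ y, x < y := by
  obtain ⟨y, hy⟩ := hB.bdd {x} (by simpa using one_le_aleph0.trans hB.inf)
  exact ⟨y, hy x rfl⟩

theorem exists_least_s18 {X : Type u} [LinearOrder X] [WellFoundedLT X] (s : Set X) (h : s.Nonempty) :
    ∃ x, IsLeast s x := by
  refine ⟨wellFounded_lt.min s h, WellFounded.min_mem _ _ _, fun y hy => ?_⟩
  exact not_lt.1 (WellFounded.not_lt_min _ _ hy)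

theorem Big.lub (hB : Big X τ) (c : Set X) (hc : #c ≤ τ) : ∃ x, IsLUB c x := by
  obtain ⟨x, hx⟩ := hB.bdd c hc
  exact exists_least_s18 (upperBounds c) ⟨x, fun y hy => (hx y hy).le⟩

theorem Big.closure (hB : Big X τ) {σ : Cardinal.{u}} (hσ : σ.IsRegular) (hle : σ ≤ τ) (x0 : X)
    (b : X → X) : ∃ x, x0 < x ∧ (∀ y < x, b y < x) ∧
      (∀ c ⊆ Iio x, #c < σ → ∃ y < x, ∀ z ∈ c, z < y) ∧
      ∃ c ⊆ Iio x, #c ≤ σ ∧ ∀ y < x, ∃ z ∈ c, y < z := by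
  have hb : ∀ x, ∃ w, x < w ∧ ∀ y ≤ x, b y < w := by
    intro x
    have hI : #(Iic x) ≤ τ := by
      rw [← Iio_union_right]
      refine (mk_union_le _ _).trans (add_le_of_le hB.inf (hB.small x) ?_)
      simpa using one_le_aleph0.trans hB.inf
    obtain ⟨w, hw⟩ := hB.bdd (Iic x ∪ b '' Iic x) ((mk_union_le _ _).trans
      (add_le_of_le hB.inf hI (mk_image_le.trans hI)))
    exact ⟨w, hw x (Or.inl le_rfl), fun y hy => hw _ (Or.inr ⟨y, hy, rfl⟩)⟩
  choose b' hb1 hb2 using hb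
  have := hB.nonempty
  obtain ⟨g, hg⟩ := rec_exists_s18 (R := σ.ord.ToType) (W := X)
    (fun i p w => x0 < w ∧ ∀ j < i, b' (p j) < w)
    (by
      intro i p
      have hI : #((fun j => b' (p j)) '' Iio i) ≤ τ :=
        mk_image_le.trans ((toType_small i).le.trans hle)
      obtain ⟨w, hw⟩ := hB.bdd ({x0} ∪ (fun j => b' (p j)) '' Iio i) ((mk_union_le _ _).trans
        (add_le_of_le hB.inf (by simpa using one_le_aleph0.trans hB.inf) hI))
      exact ⟨w, hw _ (Or.inl rfl), fun j hj => hw _ (Or.inr ⟨j, hj, rfl⟩)⟩)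
    (by
      rintro i p p' w he ⟨h1, h2⟩
      exact ⟨h1, fun j hj => by rw [← he j hj]; exact h2 j hj⟩)
  have hbd := toType_bdd hσ
  have hmono : ∀ i j, i < j → g i < g j := fun i j hij => (hb1 _).trans ((hg j).2 i hij)
  have hrc : #(range g) ≤ σ := mk_range_le.trans (by simp)
  obtain ⟨x, hx⟩ := hB.lub (range g) (hrc.trans hle)
  have hnext : ∀ i : σ.ord.ToType, ∃ j, i < j := by
    intro i
    obtain ⟨j, hj⟩ := hbd {i} (by simpa using one_lt_aleph0.trans_le hσ.aleph0_le)
    exact ⟨j, hj i rfl⟩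
  have hlt : ∀ i, g i < x := by
    intro i
    obtain ⟨j, hj⟩ := hnext i
    exact (hmono i j hj).trans_le (hx.1 ⟨j, rfl⟩)
  have hex : ∀ y < x, ∃ i, y < g i := by
    intro y hy
    obtain ⟨_, ⟨i, rfl⟩, hi⟩ := (lt_isLUB_iff hx).1 hy
    exact ⟨i, hi⟩
  refine ⟨x, ?_, ?_, ?_, range g, ?_, hrc, ?_⟩
  · obtain ⟨i, -⟩ := hbd ∅ (by simpa using hσ.pos)
    exact (hg i).1.trans (hlt i)
  · intro y hy
    obtain ⟨i, hi⟩ := hex y hy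
    obtain ⟨j, hj⟩ := hnext i
    exact (hb2 _ y hi.le).trans (((hg j).2 i hj).trans (hlt j))
  · intro c hc hcs
    have : ∀ z : c, ∃ i, z.1 < g i := fun z => hex _ (hc z.2)
    choose k hk using this
    obtain ⟨i, hi⟩ := hbd (range k) (mk_range_le.trans_lt hcs)
    exact ⟨g i, hlt i, fun z hz => (hk ⟨z, hz⟩).trans (hmono _ _ (hi _ ⟨⟨z, hz⟩, rfl⟩))⟩
  · rintro _ ⟨i, rfl⟩
    exact hlt i
  · intro y hy
    obtain ⟨i, hi⟩ := hex y hy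
    exact ⟨_, ⟨i, rfl⟩, hi⟩

end

def LAcc {X : Type u} [LinearOrder X] (E : Set X) (x : X) : Prop :=
  (∃ y, y < x) ∧ ∀ y < x, ∃ z ∈ E, y < z ∧ z < x

def Club {X : Type u} [LinearOrder X] (E : Set X) : Prop :=
  (∀ x, ∃ y ∈ E, x < y) ∧ ∀ x, LAcc E x → x ∈ E

theorem club_iInter {X : Type u} [LinearOrder X] [WellFoundedLT X] {τ : Cardinal.{u}}
    (hB : Big X τ) {ι : Type u} (hι : #ι ≤ τ) (E : ι → Set X) (hE : ∀ i, Club (E i)) :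
    Club (⋂ i, E i) := by
  constructor
  · intro x0
    choose e he1 he2 using fun i => (hE i).1
    have : ∀ y, ∃ w, ∀ i, e i y < w := by
      intro y
      obtain ⟨w, hw⟩ := hB.bdd (range fun i => e i y) (mk_range_le.trans hι)
      exact ⟨w, fun i => hw _ ⟨i, rfl⟩⟩
    choose b hb using this
    obtain ⟨x, hx0, hx, -, -⟩ := hB.closure isRegular_aleph0 hB.inf x0 b
    refine ⟨x, mem_iInter.2 fun i => (hE i).2 x ⟨⟨x0, hx0⟩, fun y hy => ?_⟩, hx0⟩
    exact ⟨e i y, he1 i y, he2 i y, (hb y i).trans (hx y hy)⟩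
  · rintro x ⟨h1, h2⟩
    refine mem_iInter.2 fun i => (hE i).2 x ⟨h1, fun y hy => ?_⟩
    obtain ⟨z, hz, h⟩ := h2 y hy
    exact ⟨z, mem_iInter.1 hz i, h⟩

theorem club_greatest {X : Type u} [LinearOrder X] [WellFoundedLT X] {E : Set X} (hE : Club E)
    {g : X} (hne : (E ∩ Iic g).Nonempty) : ∃ d, IsGreatest (E ∩ Iic g) d := by
  obtain ⟨x, hx1, hx2⟩ := exists_least_s18 (upperBounds (E ∩ Iic g)) ⟨g, fun y hy => hy.2⟩
  have hxg : x ≤ g := hx2 fun y hy => hy.2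
  by_cases hxE : x ∈ E
  · exact ⟨x, ⟨hxE, hxg⟩, hx1⟩
  exfalso
  have hlt : ∀ y ∈ E ∩ Iic g, y < x := fun y hy =>
    lt_of_le_of_ne (hx1 hy) (by rintro rfl; exact hxE hy.1)
  apply hxE
  apply hE.2
  refine ⟨⟨_, hlt _ hne.some_mem⟩, fun y hy => ?_⟩
  have : ∃ z ∈ E ∩ Iic g, y < z := by
    by_contra hcon
    push Not at hcon
    exact absurd (hx2 hcon) (not_le.2 hy)
  obtain ⟨z, hz, hyz⟩ := this
  exact ⟨z, hz.1, hyz, hlt z hz⟩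

theorem club_guess {R : Type u} [LinearOrder R] [WellFoundedLT R] {μ : Cardinal.{u}}
    (hμ : μ.IsRegular) (hB : Big R (Order.succ μ)) :
    ∃ C : R → Set R, ∀ E, Club E → ∃ α, C α ⊆ E ∧ (∀ i ∈ C α, ∃ i' ∈ C α, i < i') ∧
      μ ≤ #(C α) := by
  have hc : ∀ α : R, ∃ c : Set R, c ⊆ Iio α ∧ #c ≤ μ ∧
      ((∃ c' ⊆ Iio α, #c' ≤ μ ∧ ∀ y < α, ∃ z ∈ c', y < z) → ∀ y < α, ∃ z ∈ c, y < z) := by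
    intro α
    by_cases h : ∃ c' ⊆ Iio α, #c' ≤ μ ∧ ∀ y < α, ∃ z ∈ c', y < z
    · obtain ⟨c', h1, h2, h3⟩ := h
      exact ⟨c', h1, h2, fun _ => h3⟩
    · exact ⟨∅, by simp, by simp, fun h' => absurd h' h⟩
  choose c hc1 hc2 hc3 using hc
  let G : Set R → R → Set R := fun E α => {d | ∃ γ ∈ c α, IsGreatest (E ∩ Iic γ) d}
  by_contra hcon
  push Not at hcon
  choose E' hE'club hE' using fun E => hcon (G E)
  obtain ⟨E, hE⟩ := rec_exists_s18 (R := (Order.succ μ).ord.ToType) (W := Set R)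
    (fun ν p w => w = ⋂ ν' : Iio ν, E' (p ν'.1)) (fun ν p => ⟨_, rfl⟩)
    (by
      rintro ν p p' w he rfl
      exact iInter_congr fun ν' => by rw [he _ ν'.2])
  have hBN : Big (Order.succ μ).ord.ToType μ := big_succ hμ.aleph0_le
  have hsub : ∀ ν' ν, ν' < ν → E ν ⊆ E' (E ν') := by
    intro ν' ν h
    rw [hE ν]
    exact iInter_subset_of_subset ⟨ν', h⟩ subset_rfl
  have hanti : ∀ ν' ν, ν' ≤ ν → E ν ⊆ E ν' := by
    intro ν' ν h
    rw [hE ν']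
    exact subset_iInter fun ν'' => hsub _ _ (lt_of_lt_of_le ν''.2 h)
  have hclub : ∀ ν, Club (E ν) := by
    intro ν
    rw [hE ν]
    exact club_iInter hB ((hBN.small ν).trans (Order.le_succ μ)) _ fun i => hE'club _
  have hclubS : Club (⋂ ν, E ν) := club_iInter hB (by simp) _ hclub
  choose b hb1 hb2 using hclubS.1
  obtain ⟨x0⟩ := hB.nonempty
  obtain ⟨α, hα0, hαb, hαc, hαu⟩ := hB.closure hμ (Order.le_succ μ) x0 b
  have hcα := hc3 α hαu
  have hstab : ∀ γ : c α, ∃ ν0, ∀ ν, ν0 ≤ ν → ∀ d, IsGreatest (E ν0 ∩ Iic γ.1) d →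
      IsGreatest (E ν ∩ Iic γ.1) d := by
    intro γ
    by_cases hem : ∃ ν, ¬ (E ν ∩ Iic γ.1).Nonempty
    · obtain ⟨ν0, h0⟩ := hem
      exact ⟨ν0, fun ν _ d hd => absurd ⟨d, hd.1⟩ h0⟩
    · push Not at hem
      choose d hd using fun ν => club_greatest (hclub ν) (hem ν)
      obtain ⟨ν1⟩ := hBN.nonempty
      obtain ⟨_, ⟨ν0, rfl⟩, hmin⟩ := exists_least_s18 (range d) ⟨d ν1, ν1, rfl⟩
      refine ⟨ν0, fun ν hν d' hd' => ?_⟩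
      have e1 : d' = d ν0 := hd'.unique (hd ν0)
      have e2 : d ν = d ν0 := le_antisymm
        ((hd ν0).2 ⟨hanti _ _ hν (hd ν).1.1, (hd ν).1.2⟩) (hmin ⟨ν, rfl⟩)
      rw [e1, ← e2]
      exact hd ν
  choose nu hnu using hstab
  obtain ⟨ν1, hν1⟩ := hBN.bdd (range nu) (mk_range_le.trans (hc2 α))
  obtain ⟨ν2, hν2⟩ := hBN.gt ν1
  have hG1 : G (E ν1) α ⊆ E' (E ν1) := by
    rintro d ⟨γ, hγ, hd⟩
    have hlt := hν1 _ ⟨⟨γ, hγ⟩, rfl⟩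
    have hd0 : IsGreatest (E (nu ⟨γ, hγ⟩) ∩ Iic γ) d := by
      obtain ⟨d', hd'⟩ := club_greatest (hclub (nu ⟨γ, hγ⟩)) (g := γ)
        ⟨d, hanti _ _ hlt.le hd.1.1, hd.1.2⟩
      have := hnu ⟨γ, hγ⟩ ν1 hlt.le d' hd'
      rw [hd.unique this]
      exact hd'
    exact hsub _ _ hν2 (hnu ⟨γ, hγ⟩ ν2 (hlt.trans hν2).le d hd0).1.1
  have hG2 : ∀ d ∈ G (E ν1) α, d < α := by
    rintro d ⟨γ, hγ, hd⟩
    exact lt_of_le_of_lt hd.1.2 (hc1 α hγ)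
  have hG3 : ∀ y < α, ∃ d ∈ G (E ν1) α, y < d := by
    intro y hy
    obtain ⟨γ, hγ, hlt⟩ := hcα _ (hαb y hy)
    have hm : b y ∈ E ν1 ∩ Iic γ := ⟨mem_iInter.1 (hb1 y) ν1, hlt.le⟩
    obtain ⟨d, hd⟩ := club_greatest (hclub ν1) ⟨_, hm⟩
    exact ⟨d, ⟨γ, hγ, hd⟩, (hb2 y).trans_le (hd.2 hm)⟩
  have hlt := hE' (E ν1) α hG1 (fun i hi => hG3 i (hG2 i hi))
  obtain ⟨y, hy, hyz⟩ := hαc _ hG2 hlt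
  obtain ⟨d, hd, hyd⟩ := hG3 y hy
  exact absurd (hyz d hd) hyd.le.not_gt

def ClubIn {X : Type u} [LinearOrder X] (E : Set X) (s : X) : Prop :=
  E ⊆ Iio s ∧ (∀ y < s, ∃ z ∈ E, y < z) ∧ ∀ x < s, LAcc E x → x ∈ E

structure Scale {W I : Type u} [LinearOrder W] (κ : Cardinal.{u}) (L : Filter I)
    (f : W → I → Ordinal.{u}) : Prop where
  big : Big W κ
  lim : ∀ ν < κ, Order.succ ν < κ
  hI : #I < κ
  unc : ℵ₀ < κ
  p1 : ∀ ζ s, ζ < s → ∀ᶠ i in L, f ζ i < f s i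
  p2 : ∀ s, (∃ E, ClubIn E s ∧ #E < κ) → ∃ E, ClubIn E s ∧ ∀ᶠ i in L, ∀ ζ ∈ E, f ζ i < f s i

noncomputable def upf {I N : Type u} (σ : I → N → Ordinal.{u}) (h : I → Ordinal.{u}) (a : I) :
    Ordinal.{u} := sInf {x | ∃ n, x = σ a n ∧ h a ≤ x}

theorem Scale.bpp {W I : Type u} [LinearOrder W] [WellFoundedLT W] {κ : Cardinal.{u}} {L : Filter I}
    {f : W → I → Ordinal.{u}} (hS : Scale κ L f) {N : Type u} (hN : #N < κ)
    (σ : I → N → Ordinal.{u}) (htop : ∀ a, ∃ n, ∀ ξ, f ξ a ≤ σ a n) :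
    ∃ ξ, ∀ ζ, ∀ᶠ a in L, f ζ a ≤ upf σ (f ξ) a := by
  by_contra hcon
  push Not at hcon
  have hupm : ∀ ξ a, ∃ n, upf σ (f ξ) a = σ a n ∧ f ξ a ≤ upf σ (f ξ) a := by
    intro ξ a
    obtain ⟨n, hn⟩ := htop a
    exact csInf_mem (s := {x | ∃ n, x = σ a n ∧ f ξ a ≤ x}) ⟨σ a n, n, rfl, hn ξ⟩
  let ν : Cardinal.{u} := max (max #N #I) ℵ₀
  have hν : ν < κ := max_lt (max_lt hN hS.hI) hS.unc
  have hνinf : ℵ₀ ≤ ν := le_max_right _ _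
  let μ : Cardinal.{u} := Order.succ ν
  have hμ : μ.IsRegular := isRegular_succ hνinf
  let R : Type u := (Order.succ (Order.succ μ)).ord.ToType
  have hBR : Big R (Order.succ μ) := big_succ (hμ.aleph0_le.trans (Order.le_succ _))
  have hRc : #R < κ := by
    have : #R = Order.succ (Order.succ μ) := by simp [R]
    rw [this]
    exact hS.lim _ (hS.lim _ (hS.lim _ hν))
  obtain ⟨C, hC⟩ := club_guess hμ hBR
  have hlub : ∀ c : Set W, ∃ x, #c ≤ κ → IsLUB c x := by
    intro c
    by_cases h : #c ≤ κ
    · obtain ⟨x, hx⟩ := hS.big.lub c h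
      exact ⟨x, fun _ => hx⟩
    · obtain ⟨x⟩ := hS.big.nonempty
      exact ⟨x, fun h' => absurd h' h⟩
  choose lubf hlubf using hlub
  have := hS.big.nonempty
  obtain ⟨ξ', hξ'⟩ := rec_exists_s18 (R := R) (W := W)
    (fun i p w => lubf (p '' Iio i) < w ∧ ∀ α : R,
      (∃ σ0, ∀ᶠ a in L, ∀ j ∈ C α, j ≤ i → f (lubf (p '' Iio j)) a ≤ f σ0 a) →
      ∃ σ0, (∀ᶠ a in L, ∀ j ∈ C α, j ≤ i → f (lubf (p '' Iio j)) a ≤ f σ0 a) ∧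
        ∃ᶠ a in L, upf σ (f σ0) a < f w a)
    (by
      intro i p
      have h1 : ∀ α : R, ∃ ζ,
        (∃ σ0, ∀ᶠ a in L, ∀ j ∈ C α, j ≤ i → f (lubf (p '' Iio j)) a ≤ f σ0 a) →
        ∃ σ0, (∀ᶠ a in L, ∀ j ∈ C α, j ≤ i → f (lubf (p '' Iio j)) a ≤ f σ0 a) ∧
        ∃ᶠ a in L, upf σ (f σ0) a < f ζ a := by
        intro α
        by_cases h : (∃ σ0, ∀ᶠ a in L, ∀ j ∈ C α, j ≤ i → f (lubf (p '' Iio j)) a ≤ f σ0 a)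
        · obtain ⟨σ0, h0⟩ := h
          obtain ⟨ζ, hζ⟩ := hcon σ0
          exact ⟨ζ, fun _ => ⟨σ0, h0, hζ⟩⟩
        · exact ⟨Classical.arbitrary W, fun h' => absurd h' h⟩
      choose z hz using h1
      obtain ⟨w, hw⟩ := hS.big.bdd ({lubf (p '' Iio i)} ∪ range z) ((mk_union_le _ _).trans
        (add_le_of_le hS.big.inf (by simpa using one_le_aleph0.trans hS.big.inf)
          (mk_range_le.trans hRc.le)))
      refine ⟨w, hw _ (Or.inl rfl), fun α hα => ?_⟩
      obtain ⟨σ0, h0, h1⟩ := hz α hα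
      refine ⟨σ0, h0, ?_⟩
      have h2 := hS.p1 (z α) w (hw _ (Or.inr ⟨α, rfl⟩))
      exact (h1.and_eventually h2).mono fun a ha => ha.1.trans ha.2)
    (by
      rintro i p p' w he ⟨h1, h2⟩
      have e : ∀ j ≤ i, p '' Iio j = p' '' Iio j := by
        intro j hj
        exact image_congr fun k hk => he k (lt_of_lt_of_le hk hj)
      refine ⟨by rw [← e i le_rfl]; exact h1, fun α => ?_⟩
      have h3 := h2 α
      have e2 : ∀ σ0 a, (∀ j ∈ C α, j ≤ i → f (lubf (p '' Iio j)) a ≤ f σ0 a) ↔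
        (∀ j ∈ C α, j ≤ i → f (lubf (p' '' Iio j)) a ≤ f σ0 a) := by
        intro σ0 a
        refine forall_congr' fun j => forall_congr' fun _ => forall_congr' fun hj => ?_
        rw [e j hj]
      simpa only [e2] using h3)
  let ξ : R → W := fun j => lubf (ξ' '' Iio j)
  have hlubξ : ∀ j, IsLUB (ξ' '' Iio j) (ξ j) := fun j =>
    hlubf _ (mk_image_le.trans ((mk_set_le _).trans hRc.le))
  have hξ1 : ∀ i, ξ i < ξ' i := fun i => (hξ' i).1
  have hξ2 : ∀ j i, j < i → ξ' j ≤ ξ i := fun j i h => (hlubξ i).1 ⟨j, h, rfl⟩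
  have hξ3 : ∀ i y, y < ξ i → ∃ j < i, y < ξ' j := by
    intro i y hy
    obtain ⟨_, ⟨j, hj, rfl⟩, h⟩ := (lt_isLUB_iff (hlubξ i)).1 hy
    exact ⟨j, hj, h⟩
  have hmono : StrictMono ξ := fun j i h => (hξ1 j).trans_le (hξ2 j i h)
  have hrange : #(range ξ) < κ := mk_range_le.trans_lt hRc
  obtain ⟨δ, hδ⟩ := hS.big.lub (range ξ) hrange.le
  have hlt : ∀ i, ξ i < δ := by
    intro i
    obtain ⟨j, hj⟩ := hBR.gt i
    exact (hmono hj).trans_le (hδ.1 ⟨j, rfl⟩)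
  have hex : ∀ y < δ, ∃ i, y < ξ i := by
    intro y hy
    obtain ⟨_, ⟨j, rfl⟩, h⟩ := (lt_isLUB_iff hδ).1 hy
    exact ⟨j, h⟩
  have hclub : ClubIn (range ξ) δ := by
    refine ⟨?_, ?_, ?_⟩
    · rintro _ ⟨i, rfl⟩
      exact hlt i
    · intro y hy
      obtain ⟨i, hi⟩ := hex y hy
      exact ⟨_, ⟨i, rfl⟩, hi⟩
    · rintro x hx ⟨-, hacc⟩
      obtain ⟨i0, hi0⟩ := hex x hx
      obtain ⟨i, hi, hmin⟩ := exists_least_s18 {i | x ≤ ξ i} ⟨i0, hi0.le⟩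
      rcases eq_or_lt_of_le (show x ≤ ξ i from hi) with h | h
      · exact ⟨i, h.symm⟩
      exfalso
      obtain ⟨j, hj, hxj⟩ := hξ3 i x h
      have hjx : ξ j < x := by
        by_contra hc
        exact absurd (hmin (show j ∈ {i | x ≤ ξ i} from not_lt.1 hc)) (not_le.2 hj)
      obtain ⟨_, ⟨k, rfl⟩, hk1, hk2⟩ := hacc _ hjx
      exact absurd (hxj.trans_le (hξ2 j k (hmono.lt_iff_lt.1 hk1))) hk2.le.not_gt
  obtain ⟨E, ⟨hE1, hE2, hE3⟩, hEf⟩ := hS.p2 δ ⟨_, hclub, hrange⟩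
  have hD : Club {i | ξ i ∈ E} := by
    constructor
    · intro i0
      have hb : ∀ j, ∃ k, ∃ e ∈ E, ξ j < e ∧ e < ξ k := by
        intro j
        obtain ⟨e, he, hje⟩ := hE2 _ (hlt j)
        obtain ⟨k, hk⟩ := hex e (hE1 he)
        exact ⟨k, e, he, hje, hk⟩
      choose b hb using hb
      obtain ⟨x, hx0, hx, -, -⟩ := hBR.closure isRegular_aleph0 hBR.inf i0 b
      refine ⟨x, hE3 _ (hlt x) ⟨⟨ξ i0, hmono hx0⟩, fun y hy => ?_⟩, hx0⟩
      obtain ⟨j, hj, hyj⟩ := hξ3 x y hy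
      obtain ⟨e, he, h1, h2⟩ := hb j
      obtain ⟨e', he', h1', h2'⟩ := hb (b j)
      have hjb : j < b j := hmono.lt_iff_lt.1 (h1.trans h2)
      exact ⟨e', he', (hyj.trans_le (hξ2 _ _ hjb)).trans h1', h2'.trans (hmono (hx _ (hx _ hj)))⟩
    · rintro i ⟨⟨j, hj⟩, hacc⟩
      refine hE3 _ (hlt i) ⟨⟨_, hmono hj⟩, fun y hy => ?_⟩
      obtain ⟨j, hj, hyj⟩ := hξ3 i y hy
      obtain ⟨k, hk, hjk, hki⟩ := hacc j hj
      exact ⟨ξ k, hk, hyj.trans_le (hξ2 _ _ hjk), hmono hki⟩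
  obtain ⟨α, hα1, hα2, hα3⟩ := hC _ hD
  have hQ : ∀ i, ∃ σ0, (∀ᶠ a in L, ∀ j ∈ C α, j ≤ i → f (ξ j) a ≤ f σ0 a) ∧
        ∃ᶠ a in L, upf σ (f σ0) a < f (ξ' i) a := by
    intro i
    refine (hξ' i).2 α ⟨δ, hEf.mono fun a ha j hj _ => (ha _ (hα1 hj)).le⟩
  let A : R → I → Set Ordinal.{u} := fun i a =>
    {x | (∃ n, x = σ a n) ∧ ∀ j ∈ C α, j ≤ i → f (ξ j) a ≤ x}
  have hAne : ∀ i a, (A i a).Nonempty := by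
    intro i a
    obtain ⟨n, hn⟩ := htop a
    exact ⟨_, ⟨n, rfl⟩, fun j _ _ => hn _⟩
  have humem : ∀ i a, sInf (A i a) ∈ A i a := fun i a => csInf_mem (hAne i a)
  have humono : ∀ i k a, i ≤ k → sInf (A i a) ≤ sInf (A k a) := fun i k a h =>
    csInf_le' ⟨(humem k a).1, fun j hj hji => (humem k a).2 j hj (hji.trans h)⟩
  have hstep : ∀ i : C α, ∃ a, ∀ k ∈ C α, i < k → sInf (A i a) < sInf (A k a) := by
    intro i
    obtain ⟨i', ⟨hi'C, hi'⟩, hmin⟩ := exists_least_s18 {k | k ∈ C α ∧ i < k} (hα2 i i.2)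
    obtain ⟨σ0, g1, g2⟩ := hQ i
    have g3 : ∀ᶠ a in L, f (ξ' i) a ≤ f (ξ i') a := by
      rcases eq_or_lt_of_le (hξ2 i i' hi') with h | h
      · rw [h]
        exact Filter.Eventually.of_forall fun _ => le_rfl
      · exact (hS.p1 _ _ h).mono fun a ha => ha.le
    obtain ⟨a, h2, h1, h3⟩ := (g2.and_eventually (g1.and g3)).exists
    refine ⟨a, fun k hk hik => lt_of_lt_of_le ?_ (humono i' k a (hmin ⟨hk, hik⟩))⟩
    obtain ⟨n, hn, hn2⟩ := hupm σ0 a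
    have e1 : sInf (A i a) ≤ upf σ (f σ0) a :=
      csInf_le' ⟨⟨n, hn⟩, fun j hj hji => (h1 j hj hji).trans hn2⟩
    exact ((e1.trans_lt h2).trans_le h3).trans_le ((humem i' a).2 i' hi'C le_rfl)
  choose a ha using hstep
  choose n hn using fun i : C α => (humem i (a i)).1
  have hinj : Function.Injective (fun i : C α => (a i, n i)) := by
    have key : ∀ i k : C α, i < k → (a i, n i) ≠ (a k, n k) := by
      intro i k hik he
      obtain ⟨e1, e2⟩ := Prod.mk.inj he
      have h1 := ha i k k.2 hik
      rw [hn i, e1, e2, ← hn k] at h1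
      exact lt_irrefl _ h1
    intro i k he
    rcases lt_trichotomy i k with h | h | h
    · exact absurd he (key i k h)
    · exact h
    · exact absurd he.symm (key k i h)
  have hcard := mk_le_of_injective hinj
  rw [mk_prod, lift_id, lift_id] at hcard
  have : #I * #N ≤ ν := mul_le_of_le hνinf ((le_max_right _ _).trans (le_max_left _ _))
    ((le_max_left _ _).trans (le_max_left _ _))
  exact absurd (hα3.trans (hcard.trans this)) (not_le.2 (Order.lt_succ ν))

theorem upf_le {I N : Type u} (σ : I → N → Ordinal.{u}) (h : I → Ordinal.{u}) (a : I) (n : N)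
    (hn : h a ≤ σ a n) : upf σ h a ≤ σ a n := csInf_le' ⟨n, rfl, hn⟩

theorem upf_mem {I N : Type u} (σ : I → N → Ordinal.{u}) (h : I → Ordinal.{u}) (a : I)
    (hne : ∃ n, h a ≤ σ a n) : ∃ n, upf σ h a = σ a n ∧ h a ≤ upf σ h a := by
  obtain ⟨n, hn⟩ := hne
  exact csInf_mem (s := {x | ∃ n, x = σ a n ∧ h a ≤ x}) ⟨σ a n, n, rfl, hn⟩

theorem upf_mono {I N : Type u} (σ : I → N → Ordinal.{u}) (h h' : I → Ordinal.{u}) (a : I)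
    (hne : ∃ n, h' a ≤ σ a n) (hle : h a ≤ h' a) : upf σ h a ≤ upf σ h' a := by
  obtain ⟨n, h1, h2⟩ := upf_mem σ h' a hne
  rw [h1]
  exact upf_le _ _ _ _ (hle.trans (h1 ▸ h2))

theorem Scale.lub {W I : Type u} [LinearOrder W] [WellFoundedLT W] {κ : Cardinal.{u}} {L : Filter I}
    {f : W → I → Ordinal.{u}} (hS : Scale κ L f) (P0 : I → Ordinal.{u}) (hP0 : ∀ ξ i, f ξ i ≤ P0 i) :
    ∃ p : I → Ordinal.{u}, (∀ ξ, ∀ᶠ i in L, f ξ i ≤ p i) ∧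
      ∀ q : I → Ordinal.{u}, (∀ ξ, ∀ᶠ i in L, f ξ i ≤ q i) → ∀ᶠ i in L, p i ≤ q i := by
  by_contra hcon
  push Not at hcon
  let ν : Cardinal.{u} := max #I ℵ₀
  have hν : ν < κ := max_lt hS.hI hS.unc
  have hνinf : ℵ₀ ≤ ν := le_max_right _ _
  let Θ : Type u := (Order.succ ν).ord.ToType
  have hB : Big Θ ν := big_succ hνinf
  let S : (α : Θ) → (Θ → I → Ordinal.{u}) → I → Option (Iio α) → Ordinal.{u} :=
    fun α p i o => o.elim (P0 i) (fun β => p β.1 i)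
  have hSfull : ∀ α p ξ i, ∃ n, f ξ i ≤ S α p i n := fun α p ξ i => ⟨none, hP0 ξ i⟩
  obtain ⟨u, hu⟩ := rec_exists_s18 (R := Θ) (W := I → Ordinal.{u})
    (fun α p w => ∃ ξ, (∀ ζ, ∀ᶠ i in L, f ζ i ≤ upf (S α p) (f ξ) i) ∧
      (∀ ζ, ∀ᶠ i in L, f ζ i ≤ w i) ∧ ∃ᶠ i in L, w i < upf (S α p) (f ξ) i)
    (by
      intro α p
      have hc : #(Option (Iio α)) < κ := by
        rw [mk_option]
        refine lt_of_le_of_lt (add_le_of_le hνinf (hB.small α) (one_le_aleph0.trans hνinf)) hν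
      obtain ⟨ξ, hξ⟩ := hS.bpp hc (S α p) (fun a => ⟨none, fun ξ => hP0 ξ a⟩)
      obtain ⟨q, hq1, hq2⟩ := hcon _ hξ
      exact ⟨q, ξ, hξ, hq1, hq2⟩)
    (by
      intro α p p' w he h
      have : S α p = S α p' := by
        funext i o
        cases o with
        | none => rfl
        | some β => simp only [S, Option.elim]; rw [he β.1 β.2]
      rw [← this]
      exact h)
  choose ξ h1 h2 h3 using hu
  have hΘ : #Θ ≤ κ := by
    have : #Θ = Order.succ ν := by simp [Θ]
    rw [this]
    exact (hS.lim _ hν).le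
  obtain ⟨x, hx⟩ := hS.big.bdd (range ξ) (mk_range_le.trans hΘ)
  have key : ∀ α, ∃ i, ∀ β > α, upf (S β u) (f x) i < upf (S α u) (f x) i := by
    intro α
    obtain ⟨i, e3, e1, e2⟩ := ((h3 α).and_eventually
      ((hS.p1 _ _ (hx _ ⟨α, rfl⟩)).and (h2 α x))).exists
    refine ⟨i, fun β hβ => ?_⟩
    have a1 : upf (S β u) (f x) i ≤ u α i := upf_le (S β u) (f x) i (some ⟨α, hβ⟩) e2
    exact (a1.trans_lt e3).trans_le (upf_mono _ _ _ _ (hSfull _ _ _ _) e1.le)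
  choose k hk using key
  have : ∃ i, ∀ θ, ∃ α > θ, k α = i := by
    by_contra hc
    push Not at hc
    choose θ hθ using hc
    obtain ⟨t, ht⟩ := hB.bdd (range θ) (mk_range_le.trans (le_max_left _ _))
    exact hθ (k t) t (ht _ ⟨_, rfl⟩) rfl
  obtain ⟨i, hi⟩ := this
  obtain ⟨α0, -, h0⟩ := hi hB.nonempty.some
  obtain ⟨_, ⟨α, hα, rfl⟩, hmin⟩ := exists_least_s18
    ((fun α => upf (S α u) (f x) i) '' {α | k α = i}) ⟨_, α0, h0, rfl⟩
  obtain ⟨β, hβ, hkβ⟩ := hi α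
  have := hk α β hβ
  rw [show k α = i from hα] at this
  exact absurd (hmin ⟨β, hkβ, rfl⟩) (not_le.2 this)

theorem Scale.cof {W I : Type u} [LinearOrder W] [WellFoundedLT W] {κ : Cardinal.{u}} {L : Filter I}
    {f : W → I → Ordinal.{u}} (hS : Scale κ L f) (P0 : I → Ordinal.{u}) (hP0 : ∀ ξ i, f ξ i ≤ P0 i)
    (p : I → Ordinal.{u}) (hp : ∀ ξ, ∀ᶠ i in L, f ξ i ≤ p i)
    (hq : ∀ q : I → Ordinal.{u}, (∀ ξ, ∀ᶠ i in L, f ξ i ≤ q i) → ∀ᶠ i in L, p i ≤ q i)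
    (ν : Cardinal.{u}) (hν : ν < κ) : ∀ᶠ i in L, ν < (p i).cof := by
  by_contra hcon
  have hcon : ∃ᶠ i in L, (p i).cof ≤ ν := by
    simpa only [Filter.Frequently, not_le] using hcon
  have hg : ∀ i, ∃ g : ν.out → Ordinal.{u}, (p i).cof ≤ ν → 0 < p i →
      (∀ n, g n < p i) ∧ ∀ x < p i, ∃ n, x ≤ g n := by
    intro i
    by_cases h : (p i).cof ≤ ν ∧ 0 < p i
    · obtain ⟨ι, g, hg, hι⟩ := Ordinal.exists_lsub_cof (p i)
      have hne : Nonempty ι := by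
        by_contra hem
        rw [not_nonempty_iff] at hem
        rw [Ordinal.lsub_empty] at hg
        exact absurd h.2 (by rw [← hg]; simp)
      have hle : #ι ≤ #ν.out := by rw [hι, mk_out]; exact h.1
      obtain ⟨e⟩ := hle
      have hs := Function.invFun_surjective e.injective
      refine ⟨fun n => g (Function.invFun e n), fun _ _ => ⟨fun n => ?_, fun x hx => ?_⟩⟩
      · exact (Ordinal.lt_lsub g _).trans_le hg.le
      · rw [← hg, Ordinal.lt_lsub_iff] at hx
        obtain ⟨j, hj⟩ := hx
        obtain ⟨n, rfl⟩ := hs j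
        exact ⟨n, hj⟩
    · exact ⟨fun _ => 0, fun h1 h2 => absurd ⟨h1, h2⟩ h⟩
  choose g hg using hg
  have hc : #(Option ν.out) < κ := by
    rw [mk_option, mk_out]
    exact (add_le_add (le_max_left ν ℵ₀) (one_le_aleph0.trans (le_max_right ν ℵ₀))).trans_lt
      (by rw [add_eq_self (le_max_right _ _)]; exact max_lt hν hS.unc)
  obtain ⟨ξ, hξ⟩ := hS.bpp hc (fun i o => o.elim (P0 i) (g i)) (fun a => ⟨none, fun ξ => hP0 ξ a⟩)
  obtain ⟨ξ', hξ'⟩ := hS.big.gt ξ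
  obtain ⟨i, h1, h2, h3, h4⟩ := (hcon.and_eventually
    ((hq _ hξ).and ((hS.p1 _ _ hξ').and (hp ξ')))).exists
  have hlt : f ξ i < p i := h3.trans_le h4
  obtain ⟨g1, g2⟩ := hg i h1 (zero_le.trans_lt hlt)
  obtain ⟨n, hn⟩ := g2 _ hlt
  have := upf_le (fun i (o : Option ν.out) => o.elim (P0 i) (g i)) (f ξ) i (some n) hn
  exact absurd (h2.trans this) (not_le.2 (g1 n))

structure Ctx {W I : Type u} [LinearOrder W] (κ : Cardinal.{u}) (kap : I → Cardinal.{u})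
    (L : Filter I) (U : Ultrafilter W) (lam : Cardinal.{u}) : Prop where
  big : Big W κ
  lim : ∀ ν < κ, Order.succ ν < κ
  unc : ℵ₀ < κ
  lt : ∀ i, kap i < κ
  inf : ∀ i, ℵ₀ ≤ kap i
  hL : ∀ B : Set I, B ∈ L ↔ ∃ ν < κ, ∀ i, ν < kap i → i ∈ B
  ne : ∀ ν < κ, ∃ i, ν < kap i
  hlam : lam < κ
  hI : #I ≤ lam
  laminf : ℵ₀ ≤ lam
  hU : ∀ ζ, ∀ᶠ s in (U : Filter W), ζ < s
  indec : ∀ (Y : Type u), #Y ≤ κ → ∀ f : W → Y, ∃ X ∈ U, #(f '' X) ≤ lam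

structure IsMatrix {W I : Type u} [LinearOrder W] (kap : I → Cardinal.{u}) (L : Filter I)
    (A : W → I → Set W) : Prop where
  sub : ∀ s i, A s i ⊆ Iio s
  card : ∀ s i, #(A s i) ≤ kap i
  ev : ∀ s, ∀ ζ < s, ∀ᶠ i in L, ζ ∈ A s i

section
variable {W I : Type u} [LinearOrder W] [WellFoundedLT W] {κ : Cardinal.{u}}
  {kap : I → Cardinal.{u}} {L : Filter I} {U : Ultrafilter W} {lam : Cardinal.{u}}

theorem Ctx.evL (h : Ctx κ kap L U lam) {ν : Cardinal.{u}} (hν : ν < κ) : ∀ᶠ i in L, ν < kap i :=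
  (h.hL _).2 ⟨ν, hν, fun _ hi => hi⟩

theorem Ctx.matrix (h : Ctx κ kap L U lam) : ∃ A : W → I → Set W, IsMatrix kap L A := by
  have key : ∀ s : W, ∃ A : I → Set W, (∀ i, A i ⊆ Iio s) ∧ (∀ i, #(A i) ≤ kap i) ∧
      ∀ ζ < s, ∀ᶠ i in L, ζ ∈ A i := by
    intro s
    have hle : #(Iio s) ≤ #κ.ord.ToType := by simpa using h.big.small s
    obtain ⟨e⟩ := hle
    let o : Iio s → Ordinal.{u} := fun z => (Ordinal.ToType.mk.symm (e z)).1
    have ho : ∀ z, o z < κ.ord := fun z => (Ordinal.ToType.mk.symm (e z)).2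
    have hinj : Function.Injective o := by
      intro a b hab
      exact e.injective (Ordinal.ToType.mk.symm.injective (Subtype.ext hab))
    refine ⟨fun i => Subtype.val '' {z : Iio s | o z < (kap i).ord}, ?_, ?_, ?_⟩
    · rintro i _ ⟨z, -, rfl⟩
      exact z.2
    · intro i
      refine mk_image_le.trans ?_
      have : Function.Injective (fun z : {z : Iio s | o z < (kap i).ord} =>
          (⟨o z.1, z.2⟩ : Iio (kap i).ord)) := by
        intro a b hab
        exact Subtype.ext (hinj (Subtype.mk.inj hab))
      have h2 := lift_mk_le_lift_mk_of_injective this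
      rw [mk_Iio_ordinal, card_ord, lift_lift] at h2
      simpa using h2
    · intro ζ hζ
      refine (h.evL (lt_ord.1 (ho ⟨ζ, hζ⟩))).mono fun i hi => ⟨⟨ζ, hζ⟩, lt_ord.2 hi, rfl⟩
  choose A h1 h2 h3 using key
  exact ⟨A, h1, h2, h3⟩

theorem Ctx.scale (h : Ctx κ kap L U lam) : ∃ f : W → I → Ordinal.{u}, Scale κ L f ∧
    ∀ ξ i, f ξ i < (Order.succ (kap i)).ord := by
  obtain ⟨A0, hA0⟩ := h.matrix
  have hE : ∀ s : W, ∃ E : Set W, E ⊆ Iio s ∧ #E < κ ∧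
      ((∃ E, ClubIn E s ∧ #E < κ) → ClubIn E s) := by
    intro s
    by_cases hs : ∃ E, ClubIn E s ∧ #E < κ
    · obtain ⟨E, h1, h2⟩ := hs
      exact ⟨E, h1.1, h2, fun _ => h1⟩
    · refine ⟨∅, by simp, ?_, fun h' => absurd h' hs⟩
      rw [mk_eq_zero]
      exact aleph0_pos.trans h.unc
  choose E hE1 hE2 hE3 using hE
  let A : W → I → Set W := fun s i => A0 s i ∪ {ζ | ζ ∈ E s ∧ #(E s) ≤ kap i}
  have hA : IsMatrix kap L A := by
    refine ⟨fun s i => union_subset (hA0.sub s i) fun ζ hζ => hE1 s hζ.1, fun s i => ?_,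
      fun s ζ hζ => (hA0.ev s ζ hζ).mono fun i hi => Or.inl hi⟩
    refine (mk_union_le _ _).trans (add_le_of_le (h.inf i) (hA0.card s i) ?_)
    by_cases hc : #(E s) ≤ kap i
    · exact (mk_le_mk_of_subset (fun ζ hζ => hζ.1)).trans hc
    · simp [hc]
  obtain ⟨f, hf⟩ := rec_exists_s18 (R := W) (W := I → Ordinal.{u})
    (fun s p w => ∀ i, (∀ ζ ∈ A s i, p ζ i < w i) ∧
      ((∀ ζ ∈ A s i, p ζ i < (Order.succ (kap i)).ord) → w i < (Order.succ (kap i)).ord))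
    (by
      intro s p
      refine ⟨fun i => ⨆ ζ : A s i, (p ζ.1 i + 1), fun i => ⟨fun ζ hζ => ?_, fun hb => ?_⟩⟩
      · exact lt_of_lt_of_le (Order.lt_add_one_iff.2 le_rfl)
          (Ordinal.le_iSup (fun ζ : A s i => p ζ.1 i + 1) ⟨ζ, hζ⟩)
      · refine Ordinal.iSup_add_one_lt_of_lt_cof ?_ fun ζ => hb _ ζ.2
        rw [(isRegular_succ (h.inf i)).cof_ord]
        exact Order.lt_succ_iff.2 (hA.card s i))
    (by
      intro s p p' w he hw i
      have e : ∀ ζ ∈ A s i, p ζ i = p' ζ i := fun ζ hζ => by rw [he ζ (hA.sub s i hζ)]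
      refine ⟨fun ζ hζ => e ζ hζ ▸ (hw i).1 ζ hζ, fun hb => (hw i).2 fun ζ hζ => ?_⟩
      rw [e ζ hζ]
      exact hb ζ hζ)
  have hbound : ∀ i ξ, f ξ i < (Order.succ (kap i)).ord := by
    intro i ξ
    induction ξ using WellFoundedLT.induction with
    | ind s ih => exact (hf s i).2 fun ζ hζ => ih ζ (hA.sub s i hζ)
  refine ⟨f, ⟨h.big, h.lim, h.hI.trans_lt h.hlam, h.unc, fun ζ s hζ => ?_, fun s hs => ?_⟩,
    fun ξ i => hbound i ξ⟩
  · exact (hA.ev s ζ hζ).mono fun i hi => (hf s i).1 ζ hi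
  · refine ⟨E s, hE3 s hs, (h.evL (hE2 s)).mono fun i hi ζ hζ => ?_⟩
    exact (hf s i).1 ζ (Or.inr ⟨hζ, hi.le⟩)

end
section
variable {W I : Type u} [LinearOrder W] [WellFoundedLT W] {κ : Cardinal.{u}}
  {kap : I → Cardinal.{u}} {L : Filter I} {U : Ultrafilter W} {lam : Cardinal.{u}}

theorem Ctx.partR (h : Ctx κ kap L U lam) : ∃ (T : Set W) (F : W → Set W),
    (∀ x, ∃ δ ∈ T, x < δ) ∧ (∀ δ ∈ T, ∀ᶠ s in (U : Filter W), δ ∈ F s) ∧ ∀ s, #(F s) < κ := by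
  obtain ⟨A, hA⟩ := h.matrix
  let hcof : W → Prop := fun δ => ∀ c ⊆ Iio δ, #c ≤ lam → ∃ y < δ, ∀ z ∈ c, z < y
  let good : W → W → Prop := fun δ β => ∀ᶠ s in (U : Filter W), ∀ i,
    (∃ y < δ, ∀ z ∈ A s i, z < δ → z < y) → ∀ z ∈ A s i, z < δ → z < β
  have step1 : ∀ δ, hcof δ → ∃ β < δ, good δ β := by
    intro δ hδ
    obtain ⟨y0, hy0, -⟩ := hδ ∅ (by simp) (by simp)
    have h1 : ∀ s, ∃ β : Iio δ, ∀ i,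
        (∃ y < δ, ∀ z ∈ A s i, z < δ → z < y) → ∀ z ∈ A s i, z < δ → z < β.1 := by
      intro s
      have h2 : ∀ i, ∃ y : Iio δ, (∃ y < δ, ∀ z ∈ A s i, z < δ → z < y) →
          ∀ z ∈ A s i, z < δ → z < y.1 := by
        intro i
        by_cases hy : ∃ y < δ, ∀ z ∈ A s i, z < δ → z < y
        · obtain ⟨y, hy, hy2⟩ := hy
          exact ⟨⟨y, hy⟩, fun _ => hy2⟩
        · exact ⟨⟨y0, hy0⟩, fun h' => absurd h' hy⟩
      choose y hy using h2
      obtain ⟨β, hβ, hβ2⟩ := hδ (range fun i => (y i).1)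
        (by rintro _ ⟨i, rfl⟩; exact (y i).2) (mk_range_le.trans h.hI)
      exact ⟨⟨β, hβ⟩, fun i hi z hz hzδ => (hy i hi z hz hzδ).trans (hβ2 _ ⟨i, rfl⟩)⟩
    choose φ hφ using h1
    obtain ⟨X, hX, hXc⟩ := h.indec (Iio δ) (h.big.small δ) φ
    obtain ⟨β, hβ, hβ2⟩ := hδ (Subtype.val '' (φ '' X))
      (by rintro _ ⟨z, -, rfl⟩; exact z.2) (mk_image_le.trans hXc)
    refine ⟨β, hβ, Filter.mem_of_superset hX fun s hs i hi z hz hzδ => ?_⟩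
    exact (hφ s i hi z hz hzδ).trans (hβ2 _ ⟨φ s, ⟨s, hs, rfl⟩, rfl⟩)
  have step2 : ∃ β, ∀ x, ∃ δ, (hcof δ ∧ β < δ ∧ good δ β) ∧ x < δ := by
    by_contra hcon
    push Not at hcon
    choose b hb using hcon
    obtain ⟨x0⟩ := h.big.nonempty
    obtain ⟨δ, -, h1, h2, -⟩ := h.big.closure (isRegular_succ h.laminf)
      (Order.succ_le_of_lt h.hlam) x0 b
    have hδ : hcof δ := fun c hc hcc => h2 c hc (Order.lt_succ_iff.2 hcc)
    obtain ⟨β, hβ, hg⟩ := step1 δ hδ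
    exact absurd (h1 β hβ) (not_lt.2 (hb β δ ⟨hδ, hβ, hg⟩))
  obtain ⟨β, hβ⟩ := step2
  have hi0 : ∀ s, ∃ i, β < s → β ∈ A s i := by
    intro s
    obtain ⟨i1, -⟩ := h.ne _ h.unc
    by_cases hs : β < s
    · obtain ⟨ν, hν, hν2⟩ := (h.hL _).1 (hA.ev s β hs)
      obtain ⟨i, hi⟩ := h.ne ν hν
      exact ⟨i, fun _ => hν2 i hi⟩
    · exact ⟨i1, fun h' => absurd h' hs⟩
  choose i0 hi0 using hi0
  refine ⟨{δ | hcof δ ∧ β < δ ∧ good δ β},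
    fun s => {δ | δ < s ∧ ∀ y < δ, ∃ z ∈ A s (i0 s), y ≤ z ∧ z < δ}, hβ, ?_, ?_⟩
  · rintro δ ⟨h1, h2, h3⟩
    filter_upwards [h3, h.hU δ] with s hs hδs
    refine ⟨hδs, ?_⟩
    by_contra hcon
    push Not at hcon
    obtain ⟨y, hy, hy2⟩ := hcon
    have := hs (i0 s) ⟨y, hy, fun z hz hzδ => by
      by_contra hc
      exact absurd (hy2 z hz (not_lt.1 hc)) (not_le.2 hzδ)⟩ β (hi0 s (h2.trans hδs)) h2
    exact lt_irrefl _ this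
  · intro s
    have hm : ∀ δ : {δ | δ < s ∧ ∀ y < δ, ∃ z ∈ A s (i0 s), y ≤ z ∧ z < δ},
        ∃ m, IsLeast {z | z ∈ insert s (A s (i0 s)) ∧ δ.1 ≤ z} m := fun δ =>
      exists_least_s18 _ ⟨s, mem_insert _ _, δ.2.1.le⟩
    choose m hm using hm
    have key : ∀ δ δ', δ < δ' → m δ < m δ' := by
      intro δ δ' hd
      obtain ⟨z, hz, h1, h2⟩ := δ'.2.2 δ hd
      exact ((hm δ).2 ⟨mem_insert_of_mem _ hz, h1⟩).trans_lt (h2.trans_le (hm δ').1.2)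
    have hinj : Function.Injective (fun δ => (⟨m δ, (hm δ).1.1⟩ : (insert s (A s (i0 s)) : Set W))) := by
      intro δ δ' he
      have he := Subtype.mk.inj he
      rcases lt_trichotomy δ δ' with hl | hl | hl
      · exact absurd he (key _ _ hl).ne
      · exact hl
      · exact absurd he (key _ _ hl).ne'
    refine (mk_le_of_injective hinj).trans_lt (mk_insert_le.trans_lt ?_)
    exact (add_le_of_le (h.inf _) (hA.card _ _) (one_le_aleph0.trans (h.inf _))).trans_lt (h.lt _)

theorem Ctx.partR2 (h : Ctx κ kap L U lam) (T : Set W) (F : W → Set W)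
    (hT : ∀ x, ∃ δ ∈ T, x < δ) (hF : ∀ δ ∈ T, ∀ᶠ s in (U : Filter W), δ ∈ F s)
    (ν : Cardinal.{u}) (hν : ν < κ) : ∀ᶠ s in (U : Filter W), ν < #(F s) := by
  by_contra hcon
  rw [Ultrafilter.eventually_not.symm] at hcon
  let ν' := max ν lam
  have hν' : ν' < κ := max_lt hν h.hlam
  have hinf : ℵ₀ ≤ ν' := h.laminf.trans (le_max_right _ _)
  have hBN : Big (Order.succ ν').ord.ToType ν' := big_succ hinf
  have hTc : κ < #T := by
    by_contra hc
    obtain ⟨x, hx⟩ := h.big.bdd T (not_lt.1 hc)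
    obtain ⟨δ, hδ, hxδ⟩ := hT x
    exact absurd (hx δ hδ) hxδ.le.not_gt
  have hNk : #(Order.succ ν').ord.ToType ≤ κ := by
    rw [mk_ord_toType]; exact (h.lim _ hν').le
  obtain ⟨t⟩ := hNk.trans hTc.le
  have hl : ∀ s, ∃ l, #(F s) ≤ ν' → ∀ n, (t n).1 ∈ F s → n < l := by
    intro s
    by_cases hs : #(F s) ≤ ν'
    · have hinj : Function.Injective (fun n : {n | (t n).1 ∈ F s} => (⟨(t n.1).1, n.2⟩ : F s)) := by
        intro a b hab
        exact Subtype.ext (t.injective (Subtype.ext (Subtype.mk.inj hab)))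
      obtain ⟨l, hl⟩ := hBN.bdd _ ((mk_le_of_injective hinj).trans hs)
      exact ⟨l, fun _ n hn => hl n hn⟩
    · exact ⟨hBN.nonempty.some, fun h' => absurd h' hs⟩
  choose l hl using hl
  obtain ⟨X, hX, hXc⟩ := h.indec _ hNk l
  obtain ⟨n, hn⟩ := hBN.bdd (l '' X) (hXc.trans (le_max_right _ _))
  have hX' : ∀ᶠ s in (U : Filter W), s ∈ X := hX
  obtain ⟨s, h1, h2, h3⟩ := (hX'.and ((hF _ (t n).2).and hcon)).exists
  exact lt_asymm (hl s ((not_lt.1 h3).trans (le_max_left _ _)) n h2) (hn _ ⟨s, h1, rfl⟩)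

end

theorem Ctx.contra {W I : Type u} [LinearOrder W] [WellFoundedLT W] {κ : Cardinal.{u}}
    {kap : I → Cardinal.{u}} {L : Filter I} {U : Ultrafilter W} {lam : Cardinal.{u}}
    (h : Ctx κ kap L U lam) : False := by
  classical
  obtain ⟨T, F, hT, hF, hFc⟩ := h.partR
  obtain ⟨f, hS, hb⟩ := h.scale
  let P0 : I → Ordinal.{u} := fun i => (Order.succ (kap i)).ord
  have hP0 : ∀ ξ i, f ξ i ≤ P0 i := fun ξ i => (hb ξ i).le
  have hP0k : ∀ i, P0 i < κ.ord := fun i => ord_lt_ord.2 (h.lim _ (h.lt i))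
  obtain ⟨p, hp, hq⟩ := hS.lub P0 hP0
  have hcof := hS.cof P0 hP0 p hp hq
  have hg : ∀ s, ∃ i, #(F s) < (p i).cof ∧ #(F s) < kap i := by
    intro s
    obtain ⟨ν, hν, hν2⟩ := (h.hL _).1 ((hcof _ (hFc s)).and (h.evL (hFc s)))
    obtain ⟨i, hi⟩ := h.ne ν hν
    exact ⟨i, hν2 i hi⟩
  choose g hg1 hg2 using hg
  have hgL : ∀ Q : I → Prop, (∀ᶠ i in L, Q i) → ∀ᶠ s in (U : Filter W), Q (g s) := by
    intro Q hQ
    obtain ⟨ν, hν, hν2⟩ := (h.hL _).1 hQ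
    exact (h.partR2 T F hT hF ν hν).mono fun s hs => hν2 _ (hs.trans (hg2 s))
  let q : W → Ordinal.{u} := fun s =>
    min (⨆ ξ : F s, if f ξ.1 (g s) < p (g s) then f ξ.1 (g s) else 0) (P0 (g s))
  have hq1 : ∀ s, q s < p (g s) := by
    intro s
    refine (min_le_left _ _).trans_lt (Ordinal.iSup_lt_of_lt_cof (hg1 s) fun ξ => ?_)
    split_ifs with hξ
    · exact hξ
    · rw [pos_iff_ne_zero]
      intro h0
      have := hg1 s
      rw [h0, Ordinal.cof_zero] at this
      exact absurd this not_lt_zero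
  have hq2 : ∀ s, q s < κ.ord := fun s => (min_le_right _ _).trans_lt (hP0k _)
  have hq3 : ∀ s, ∀ ξ ∈ F s, f ξ (g s) < p (g s) → f ξ (g s) ≤ q s := by
    intro s ξ hξ hlt
    refine le_min ?_ (hP0 _ _)
    have := Ordinal.le_iSup (fun ξ : F s => if f ξ.1 (g s) < p (g s) then f ξ.1 (g s) else 0) ⟨ξ, hξ⟩
    simpa [hlt] using this
  let φ : W → κ.ord.ToType := fun s => Ordinal.ToType.mk ⟨q s, hq2 s⟩
  obtain ⟨X, hX, hXc⟩ := h.indec _ (by simp) φ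
  have hN : #(Option (φ '' X)) < κ := by
    rw [mk_option]
    exact (add_le_of_le h.laminf hXc (one_le_aleph0.trans h.laminf)).trans_lt h.hlam
  let σ : I → Option (φ '' X) → Ordinal.{u} := fun i o =>
    o.elim (P0 i) (fun y => (Ordinal.ToType.mk.symm y.1).1)
  obtain ⟨ξ0, hξ0⟩ := hS.bpp hN σ (fun a => ⟨none, fun ξ => hP0 ξ a⟩)
  obtain ⟨ξ, hξT, hξ⟩ := hT ξ0
  have hub : ∀ ζ, ∀ᶠ i in L, f ζ i ≤ upf σ (f ξ) i := by
    intro ζ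
    filter_upwards [hξ0 ζ, hS.p1 _ _ hξ] with i h1 h2
    exact h1.trans (upf_mono _ _ _ _ ⟨none, hP0 ξ i⟩ h2.le)
  obtain ⟨ξ', hξ'⟩ := h.big.gt ξ
  have hX' : ∀ᶠ s in (U : Filter W), s ∈ X := hX
  obtain ⟨s, ⟨h1, h2, h3⟩, h4, h5⟩ := ((hgL _ ((hq _ hub).and ((hS.p1 _ _ hξ').and (hp ξ')))).and
    ((hF ξ hξT).and hX')).exists
  have h6 := hq3 s ξ h4 (h2.trans_le h3)
  have e : σ (g s) (some ⟨φ s, s, h5, rfl⟩) = q s := by simp [σ, φ]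
  have h7 := upf_le σ (f ξ) (g s) (some ⟨φ s, s, h5, rfl⟩) (by rw [e]; exact h6)
  rw [e] at h7
  exact absurd (h1.trans h7) (not_le.2 (hq1 s))

theorem charU_base {α : Type u} (U : Ultrafilter α) : ∃ B : Set (Set α), #B = charU U ∧
    (∀ X ∈ B, X ∈ U) ∧ ∀ Y ∈ U, ∃ X ∈ B, X ⊆ Y := by
  have : (charU U) ∈ {c | ∃ B : Set (Set α), #B = c ∧ (∀ X ∈ B, X ∈ U) ∧
      ∀ Y ∈ U, ∃ X ∈ B, X ⊆ Y} :=
    csInf_mem ⟨_, {X | X ∈ U}, rfl, fun X hX => hX, fun Y hY => ⟨Y, hY, subset_rfl⟩⟩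
  exact this

theorem charU_le {α : Type u} (U : Ultrafilter α) (B : Set (Set α)) (h1 : ∀ X ∈ B, X ∈ U)
    (h2 : ∀ Y ∈ U, ∃ X ∈ B, X ⊆ Y) : charU U ≤ #B := csInf_le' ⟨B, rfl, h1, h2⟩

theorem uNumber_le {κ : Cardinal.{u}} (V : Ultrafilter κ.out) (hV : Uniform V) :
    uNumber κ ≤ charU V := csInf_le' ⟨V, hV, rfl⟩

theorem two_le_charU {α : Type u} (hα : ℵ₀ ≤ #α) (U : Ultrafilter α) (hU : Uniform U) :
    2 ≤ charU U := by
  obtain ⟨B, hB, h1, h2⟩ := charU_base U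
  rw [← hB]
  by_contra hcon
  have hle : #B ≤ 1 := by
    have h3 : #B < 2 := not_le.1 hcon
    have e2 : (2 : Cardinal.{u}) = Order.succ 1 := by
      have := Cardinal.nat_succ 1
      norm_num at this
      exact this
    rw [e2] at h3
    exact Order.lt_succ_iff.1 h3
  rw [le_one_iff_subsingleton] at hle
  obtain ⟨X, hX, -⟩ := h2 univ Filter.univ_mem
  obtain ⟨x, hx⟩ := Ultrafilter.nonempty_of_mem (h1 X hX)
  have hx1 : ({x} : Set α) ∉ U := by
    intro hx1
    have := hU _ hx1
    rw [mk_singleton] at this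
    rw [← this] at hα
    exact absurd hα (not_le.2 one_lt_aleph0)
  obtain ⟨Y, hY, hYx⟩ := h2 _ (Ultrafilter.compl_mem_iff_notMem.2 hx1)
  have : (⟨X, hX⟩ : B) = ⟨Y, hY⟩ := Subsingleton.elim _ _
  have := Subtype.mk.inj this
  subst this
  exact hYx hx rfl

theorem exists_uniform {α : Type u} (hα : (#α).IsRegular) : ∃ U : Ultrafilter α, Uniform U := by
  let L : Filter α :=
    { sets := {X | #(Xᶜ : Set α) < #α}
      univ_sets := by simpa using hα.pos
      sets_of_superset := fun {X Y} hX hXY =>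
        (mk_le_mk_of_subset (compl_subset_compl.2 hXY)).trans_lt hX
      inter_sets := fun {X Y} hX hY => by
        simp only [mem_setOf_eq, compl_inter] at *
        exact (mk_union_le _ _).trans_lt (add_lt_of_lt hα.aleph0_le hX hY) }
  have hne : L.NeBot := by
    rw [Filter.neBot_iff]
    intro hbot
    have : (∅ : Set α) ∈ L := by rw [hbot]; exact Filter.mem_bot
    have h2 : #((∅ : Set α)ᶜ : Set α) < #α := this
    simp at h2
  refine ⟨Ultrafilter.of L, fun X hX => ?_⟩
  by_contra hc
  have hlt : #X < #α := lt_of_le_of_ne (mk_set_le X) hc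
  have h1 : Xᶜ ∈ L := by
    change #(Xᶜᶜ : Set α) < #α
    rwa [compl_compl]
  exact Ultrafilter.compl_notMem_iff.2 hX (Ultrafilter.of_le L h1)

theorem decomp_exists {κ : Cardinal.{u}} (hlim : ∀ ν < κ, Order.succ ν < κ) (hunc : ℵ₀ < κ)
    {I : Type u} (hI : #I < κ) (kap : I → Cardinal.{u}) (hlt : ∀ i, kap i < κ)
    (hinf : ∀ i, ℵ₀ ≤ kap i) (hne : ∀ ν < κ, ∃ i, ν < kap i) (L : Filter I)
    (hL : ∀ B : Set I, B ∈ L ↔ ∃ ν < κ, ∀ i, ν < kap i → i ∈ B)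
    (U : Ultrafilter (Order.succ κ).out) (hU : Uniform U) (lam : Cardinal.{u}) (hlam : lam < κ) :
    ∃ f : (Order.succ κ).out → κ.out, ∀ X ∈ U, lam < #(f '' X) := by
  by_contra hcon
  push Not at hcon
  obtain ⟨e⟩ : Nonempty ((Order.succ κ).out ≃ (Order.succ κ).ord.ToType) := by
    rw [← Cardinal.eq]
    simp
  have hB : Big (Order.succ κ).ord.ToType κ := big_succ hunc.le
  refine Ctx.contra (W := (Order.succ κ).ord.ToType) (I := I) (κ := κ) (kap := kap) (L := L)
    (U := U.map e) (lam := max lam (max ℵ₀ #I)) ?_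
  refine ⟨hB, hlim, hunc, hlt, hinf, hL, hne, max_lt hlam (max_lt hunc hI),
    (le_max_right _ _).trans (le_max_right _ _), (le_max_left _ _).trans (le_max_right _ _), ?_, ?_⟩
  · intro ζ
    by_contra hc
    rw [Ultrafilter.eventually_not.symm] at hc
    have hc' : e ⁻¹' {s | ¬ ζ < s} ∈ U := hc
    have h1 := hU _ hc'
    rw [mk_out] at h1
    have h2 : #(e ⁻¹' {s | ¬ ζ < s}) ≤ #({s | ¬ ζ < s} : Set (Order.succ κ).ord.ToType) :=
      mk_preimage_of_injective _ _ e.injective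
    obtain ⟨ζ', hζ'⟩ := hB.gt ζ
    have h3 : #({s | ¬ ζ < s} : Set (Order.succ κ).ord.ToType) ≤ κ :=
      (mk_le_mk_of_subset fun s hs => lt_of_le_of_lt (not_lt.1 hs) hζ').trans (hB.small ζ')
    rw [h1] at h2
    exact absurd (h2.trans h3) (not_le.2 (Order.lt_succ κ))
  · intro Y hY f
    have hY' : #Y ≤ #κ.out := by rwa [mk_out]
    obtain ⟨j⟩ := hY'
    obtain ⟨X, hX, hXc⟩ := hcon (fun s => j (f (e s)))
    refine ⟨e '' X, ?_, ?_⟩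
    · change e ⁻¹' (e '' X) ∈ U
      rwa [preimage_image_eq _ e.injective]
    · rw [image_image]
      refine le_trans ?_ (hXc.trans (le_max_left _ _))
      rw [← mk_image_eq j.injective, image_image]

theorem uNumber_singular {κ : Cardinal.{u}} (hκ : ℵ₀ ≤ κ) (hcof : κ.ord.cof < κ)
    (U : Ultrafilter (Order.succ κ).out) (hU : Uniform U) :
    uNumber κ ≤ charU U ^ κ.ord.cof := by
  have hnr : ¬ κ.IsRegular := fun h => absurd h.cof_ord hcof.ne
  have hlim : ∀ ν < κ, Order.succ ν < κ := by
    intro ν hν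
    refine lt_of_le_of_ne (Order.succ_le_of_lt hν) ?_
    rintro rfl
    by_cases hinf : ℵ₀ ≤ ν
    · exact hnr (isRegular_succ hinf)
    · exact absurd hκ (not_le.2 (isSuccLimit_aleph0.succ_lt (not_le.1 hinf)))
  have hunc : ℵ₀ < κ := lt_of_le_of_ne hκ (by rintro rfl; exact hnr isRegular_aleph0)
  obtain ⟨I, o, ho, hI⟩ := Ordinal.exists_lsub_cof κ.ord
  let kap : I → Cardinal.{u} := fun i => max ℵ₀ (o i).card
  have hlt : ∀ i, kap i < κ := fun i =>
    max_lt hunc (lt_ord.1 ((Ordinal.lt_lsub o i).trans_le ho.le))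
  have hinf : ∀ i, ℵ₀ ≤ kap i := fun i => le_max_left _ _
  have hne : ∀ ν < κ, ∃ i, ν < kap i := by
    intro ν hν
    have h1 : (Order.succ ν).ord < κ.ord := ord_lt_ord.2 (hlim ν hν)
    rw [← ho, Ordinal.lt_lsub_iff] at h1
    obtain ⟨i, hi⟩ := h1
    exact ⟨i, (Order.lt_succ ν).trans_le ((ord_le.1 hi).trans (le_max_right _ _))⟩
  let L : Filter I :=
    { sets := {B | ∃ ν < κ, ∀ i, ν < kap i → i ∈ B}
      univ_sets := ⟨ℵ₀, hunc, fun _ _ => mem_univ _⟩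
      sets_of_superset := fun {X Y} hX hXY => by
        obtain ⟨ν, h1, h2⟩ := hX
        exact ⟨ν, h1, fun i hi => hXY (h2 i hi)⟩
      inter_sets := fun {X Y} hX hY => by
        obtain ⟨ν, h1, h2⟩ := hX
        obtain ⟨ν', h1', h2'⟩ := hY
        exact ⟨max ν ν', max_lt h1 h1', fun i hi => ⟨h2 i ((le_max_left _ _).trans_lt hi),
          h2' i ((le_max_right _ _).trans_lt hi)⟩⟩ }
  have hL : ∀ B : Set I, B ∈ L ↔ ∃ ν < κ, ∀ i, ν < kap i → i ∈ B := fun B => Iff.rfl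
  have hLne : L.NeBot := by
    rw [Filter.neBot_iff]
    intro hbot
    have : (∅ : Set I) ∈ L := by rw [hbot]; exact Filter.mem_bot
    obtain ⟨ν, h1, h2⟩ := (hL _).1 this
    obtain ⟨i, hi⟩ := hne ν h1
    exact h2 i hi
  choose f hf using fun i => decomp_exists hlim hunc (hI ▸ hcof) kap hlt hinf hne L hL U hU
    (kap i) (hlt i)
  let D : Ultrafilter I := Ultrafilter.of L
  have hD : (D : Filter I) ≤ L := Ultrafilter.of_le L
  let V : Ultrafilter κ.out := D.bind (fun i => U.map (f i))
  have hV : ∀ Y : Set κ.out, Y ∈ V ↔ {i | f i ⁻¹' Y ∈ U} ∈ D := fun Y => Iff.rfl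
  have hVU : Uniform V := by
    intro Y hY
    by_contra hc
    have hlt' : #Y < κ := by
      refine lt_of_le_of_ne ((mk_set_le Y).trans (mk_out κ).le) ?_
      rwa [mk_out] at hc
    have h1 : {i | #Y < kap i} ∈ D := hD ((hL _).2 ⟨_, hlt', fun i hi => hi⟩)
    obtain ⟨i, hi1, hi2⟩ := Ultrafilter.nonempty_of_mem (Filter.inter_mem ((hV Y).1 hY) h1)
    have h3 := hf i _ hi1
    exact absurd (h3.trans_le (mk_le_mk_of_subset (image_preimage_subset _ _)))
      (not_lt.2 (le_of_lt hi2))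
  obtain ⟨B, hB, hB1, hB2⟩ := charU_base U
  let G : (I → B) × {d : Set I // d ∈ D} → Set κ.out := fun x => ⋃ i ∈ x.2.1, f i '' (x.1 i).1
  have hchar : charU V ≤ #(range G) := by
    refine charU_le V _ ?_ ?_
    · rintro _ ⟨⟨b, d, hd⟩, rfl⟩
      rw [hV]
      refine Filter.mem_of_superset hd fun i hi => ?_
      refine Filter.mem_of_superset (hB1 _ (b i).2) fun s hs => ?_
      exact mem_iUnion₂.2 ⟨i, hi, s, hs, rfl⟩
    · intro Y hY
      have hb : ∀ i, ∃ b : B, f i ⁻¹' Y ∈ U → b.1 ⊆ f i ⁻¹' Y := by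
        intro i
        by_cases hi : f i ⁻¹' Y ∈ U
        · obtain ⟨X, hX, hXY⟩ := hB2 _ hi
          exact ⟨⟨X, hX⟩, fun _ => hXY⟩
        · obtain ⟨X, hX, -⟩ := hB2 univ Filter.univ_mem
          exact ⟨⟨X, hX⟩, fun h' => absurd h' hi⟩
      choose b hb using hb
      refine ⟨_, ⟨⟨b, _, (hV Y).1 hY⟩, rfl⟩, ?_⟩
      intro y hy
      obtain ⟨i, hi, s, hs, rfl⟩ := mem_iUnion₂.1 hy
      exact hb i hi hs
  have h2 : 2 ≤ charU U := two_le_charU (by rw [mk_out]; exact hκ.trans (Order.le_succ κ)) U hU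
  have hIinf : ℵ₀ ≤ #I := by
    rw [hI]
    exact Ordinal.aleph0_le_cof_iff.2 (Ordinal.one_lt_cof_iff.2 (isSuccLimit_ord hκ))
  have hpow : (2 : Cardinal.{u}) ^ #I ≤ charU U ^ #I := power_le_power_right h2
  have hinfp : ℵ₀ ≤ charU U ^ #I := hIinf.trans ((cantor _).le.trans hpow)
  have hcard : #(range G) ≤ charU U ^ #I := by
    refine mk_range_le.trans ?_
    rw [mk_prod, lift_id, lift_id, ← hB, ← power_def, hB]
    refine mul_le_of_le hinfp le_rfl (le_trans ?_ hpow)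
    rw [← mk_set]
    exact mk_subtype_le _
  rw [← hI]
  exact (uNumber_le V hVU).trans (hchar.trans hcard)

/-- `u(κ) ≤ u(κ⁺)^{cf(κ)}` for every infinite cardinal `κ`. -/
theorem stmt18 (κ : Cardinal.{u}) (hκ : ℵ₀ ≤ κ) :
    uNumber κ ≤ uNumber (Order.succ κ) ^ κ.ord.cof := by
  have hreg : (#(Order.succ κ).out).IsRegular := by
    rw [mk_out]; exact isRegular_succ hκ
  have hmem : uNumber (Order.succ κ) ∈
      {c | ∃ U : Ultrafilter (Order.succ κ).out, Uniform U ∧ charU U = c} := by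
    obtain ⟨U, hU⟩ := exists_uniform hreg
    exact csInf_mem ⟨_, U, hU, rfl⟩
  obtain ⟨U, hU, hUc⟩ := hmem
  rw [← hUc]
  rcases lt_or_eq_of_le (Ordinal.cof_ord_le κ) with hc | hc
  · exact uNumber_singular hκ hc U hU
  · rw [hc]
    have h2 : 2 ≤ charU U := two_le_charU hreg.aleph0_le U hU
    refine le_trans ?_ (power_le_power_right h2)
    obtain ⟨V, hV⟩ := exists_uniform (α := κ.out)
      (by rw [mk_out]; exact ⟨hκ, hc.ge⟩)
    refine (uNumber_le V hV).trans ?_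
    refine (charU_le V {X | X ∈ V} (fun X hX => hX) fun Y hY => ⟨Y, hY, subset_rfl⟩).trans ?_
    refine (mk_set_le _).trans ?_
    rw [mk_set, mk_out]
end
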